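/- (Lemma 2: asymptotic estimate for first derivatives of the rescaled functions.) Under the blow-up setup, assume in addition that v_i converges in C²_loc(ℝ²) to a function u₀ satisfying −Δu₀ = V(0) e^{u₀} in ℝ², where V(0) = lim_i V_i(x_i) > 0. Then for all ε > 0 and ε' ∈ (0, 1/4) there exist k = k(ε, ε') > 0, an index i₀ = i₀(ε, ε') ∈ ℕ, and a constant C > 0 such that for all i ≥ i₀, all j ∈ {1, 2}, and all θ with k ≤ |θ| ≤ δ_i ε' / r_i, one has |∂_j v_i(θ) − ∂_j u₀(θ)| ≤ ε/|θ| + C (r_i/δ_i). -/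

import Mathlib

open MeasureTheory Filter Metric

abbrev E2 := EuclideanSpace ℝ (Fin 2)

noncomputable def pd (j : Fin 2) (u : E2 → ℝ) (x : E2) : ℝ :=
  fderiv ℝ u x (EuclideanSpace.single j 1)

noncomputable def lapl (u : E2 → ℝ) (x : E2) : ℝ :=
  pd 0 (pd 0 u) x + pd 1 (pd 1 u) x

/-!
Extend `u i (x i + r i • θ)` to a function `Z` on the plane. Cutting `Z` off at the scale
`R = δ i / r i` and integrating by parts against the Newtonian kernel gives
`∂ⱼ Z = -(2π)⁻¹ ∫ Kⱼ(· - y) f(y) dy + O(1 / R)` with `Kⱼ(x) = xⱼ / |x|²` and `f` the cut-off density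
`-Δ Z`; the remainder is controlled by the integral of `|Z|` over an annulus, which is bounded
because `Z` is superharmonic, nonnegative by the minimum principle, and bounded on a circle.

By the Pohozaev identity the limiting density `V₀ e^{u₀}` has mass exactly `8π`. Since the
densities `f` have asymptotically at most that mass, almost all of it concentrates in a fixed ball,
and ε-regularity bounds `f` pointwise by a small multiple of `|x|⁻²` farther out. The potential is
thus `8π Kⱼ(x) + o(1 / |x|)`, uniformly in `i`, so `∂ⱼ Z` is close to `-4 Kⱼ`. Letting `i → ∞`
gives the same asymptotics for `∂ⱼ u₀`.
-/

section

open scoped Topology Real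

/-! ### Partial derivatives and the Laplacian -/

section PartialDerivatives

variable {f g : E2 → ℝ} {x : E2}

theorem fderiv_apply_eq_sum_pd (f : E2 → ℝ) (x h : E2) :
    fderiv ℝ f x h = ∑ j, h j * pd j f x := by
  have basis_sum : h = ∑ j, h j • EuclideanSpace.single j (1 : ℝ) := by
    ext i; fin_cases i <;> simp [Fin.sum_univ_two]
  conv_lhs => rw [basis_sum]
  simp [pd]

theorem contDiff_pd {m n : WithTop ℕ∞} (hf : ContDiff ℝ n f) (hmn : m + 1 ≤ n) (j : Fin 2) :
    ContDiff ℝ m (pd j f) :=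
  (hf.fderiv_right hmn).clm_apply contDiff_const

theorem continuous_pd (hf : ContDiff ℝ 1 f) (j : Fin 2) : Continuous (pd j f) :=
  (hf.continuous_fderiv one_ne_zero).clm_apply continuous_const

theorem continuous_pd_pd (hf : ContDiff ℝ 2 f) (j k : Fin 2) : Continuous (pd k (pd j f)) :=
  continuous_pd (contDiff_pd hf (by norm_num) j) k

theorem continuous_lapl (hf : ContDiff ℝ 2 f) : Continuous (lapl f) :=
  (continuous_pd_pd hf 0 0).add (continuous_pd_pd hf 1 1)

theorem hasCompactSupport_pd (hf : HasCompactSupport f) (j : Fin 2) :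
    HasCompactSupport (pd j f) :=
  hf.fderiv_apply ℝ _

theorem hasCompactSupport_lapl (hf : HasCompactSupport f) : HasCompactSupport (lapl f) :=
  (hasCompactSupport_pd (hasCompactSupport_pd hf 0) 0).add
    (hasCompactSupport_pd (hasCompactSupport_pd hf 1) 1)

theorem pd_pd_eq_fderiv_fderiv (hf : ContDiffAt ℝ 2 f x) (j k : Fin 2) :
    pd k (pd j f) x =
      fderiv ℝ (fderiv ℝ f) x (EuclideanSpace.single k 1) (EuclideanSpace.single j 1) := by
  have hdiff : DifferentiableAt ℝ (fderiv ℝ f) x :=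
    (hf.fderiv_right (m := 1) (by norm_num)).differentiableAt one_ne_zero
  unfold pd
  rw [fderiv_clm_apply hdiff (differentiableAt_const _)]
  simp

theorem differentiableAt_pd (hf : ContDiffAt ℝ 2 f x) (j : Fin 2) :
    DifferentiableAt ℝ (pd j f) x :=
  ((hf.fderiv_right (m := 1) (by norm_num)).differentiableAt one_ne_zero).clm_apply
    (differentiableAt_const _)

theorem pd_pd_comm (hf : ContDiffAt ℝ 2 f x) (j k : Fin 2) :
    pd k (pd j f) x = pd j (pd k f) x := by
  rw [pd_pd_eq_fderiv_fderiv hf, pd_pd_eq_fderiv_fderiv hf]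
  exact (hf.isSymmSndFDerivAt (by simp)).eq _ _

theorem fderiv_fderiv_apply_apply (hf : ContDiffAt ℝ 2 f x) (h k : E2) :
    fderiv ℝ (fderiv ℝ f) x h k = ∑ i, ∑ j, h i * k j * pd i (pd j f) x := by
  have basis_sum (v : E2) : v = ∑ j, v j • EuclideanSpace.single j (1 : ℝ) := by
    ext i; fin_cases i <;> simp [Fin.sum_univ_two]
  conv_lhs => rw [basis_sum h, basis_sum k]
  simp only [pd_pd_eq_fderiv_fderiv hf, Fin.sum_univ_two, map_add, map_smul, smul_eq_mul,
    add_apply, smul_apply]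
  ring

theorem pd_congr_of_eventuallyEq (h : f =ᶠ[𝓝 x] g) (j : Fin 2) : pd j f =ᶠ[𝓝 x] pd j g := by
  filter_upwards [h.fderiv (𝕜 := ℝ)] with y hy
  simp only [pd, hy]

theorem lapl_congr_of_eventuallyEq (h : f =ᶠ[𝓝 x] g) : lapl f x = lapl g x := by
  simp only [lapl, fun j => (pd_congr_of_eventuallyEq (pd_congr_of_eventuallyEq h j) j).eq_of_nhds]

theorem pd_neg (j : Fin 2) (f : E2 → ℝ) (x : E2) : pd j (fun y => -f y) x = -pd j f x := by
  simp [pd, fderiv_fun_neg]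

theorem lapl_neg (f : E2 → ℝ) (x : E2) : lapl (fun y => -f y) x = -lapl f x := by
  have pd_neg_fun (j : Fin 2) : pd j (fun y => -f y) = fun y => -pd j f y := funext (pd_neg j f)
  simp only [lapl, pd_neg_fun, pd_neg]
  ring

theorem pd_comp_add_smul (f : E2 → ℝ) (a : E2) (R : ℝ) (j : Fin 2) (x : E2) :
    pd j (fun y => f (a + R • y)) x = R * pd j f (a + R • x) := by
  have := fderiv_comp_smul (𝕜 := ℝ) (f := fun y => f (a + y)) (x := x) R
  rw [fderiv_comp_add_left] at this
  simp only [pd, this, smul_apply, smul_eq_mul]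

theorem pd_const_mul (j : Fin 2) (c : ℝ) (f : E2 → ℝ) (x : E2) :
    pd j (fun y => c * f y) x = c * pd j f x := by
  have := fderiv_const_smul_field (𝕜 := ℝ) (f := f) c
  exact DFunLike.congr_fun (congrFun this x) (EuclideanSpace.single j 1)

theorem pd_sub_const (j : Fin 2) (c : ℝ) (f : E2 → ℝ) (x : E2) :
    pd j (fun y => f y - c) x = pd j f x := by
  simp only [pd, fderiv_sub_const]

theorem lapl_sub_const (c : ℝ) (f : E2 → ℝ) (x : E2) : lapl (fun y => f y - c) x = lapl f x := by
  have pd_fun (j : Fin 2) : pd j (fun y => f y - c) = pd j f := funext (pd_sub_const j c f)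
  simp only [lapl, pd_fun]

theorem lapl_comp_add_smul (f : E2 → ℝ) (a : E2) (R : ℝ) (x : E2) :
    lapl (fun y => f (a + R • y)) x = R ^ 2 * lapl f (a + R • x) := by
  have pd_fun (j : Fin 2) : pd j (fun y => f (a + R • y)) = fun y => R * pd j f (a + R • y) :=
    funext (pd_comp_add_smul f a R j)
  simp only [lapl, pd_fun, pd_const_mul, pd_comp_add_smul]
  ring

theorem pd_mul (hf : DifferentiableAt ℝ f x) (hg : DifferentiableAt ℝ g x) (j : Fin 2) :
    pd j (fun y => f y * g y) x = f x * pd j g x + g x * pd j f x := by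
  simp [pd, fderiv_fun_mul hf hg]

theorem pd_add (hf : DifferentiableAt ℝ f x) (hg : DifferentiableAt ℝ g x) (j : Fin 2) :
    pd j (fun y => f y + g y) x = pd j f x + pd j g x := by
  simp [pd, fderiv_fun_add hf hg]

theorem lapl_add (hf : ContDiffAt ℝ 2 f x) (hg : ContDiffAt ℝ 2 g x) :
    lapl (fun y => f y + g y) x = lapl f x + lapl g x := by
  have pd_add_near (j : Fin 2) :
      pd j (fun y => f y + g y) =ᶠ[𝓝 x] fun y => pd j f y + pd j g y := by
    filter_upwards [hf.eventually (by simp), hg.eventually (by simp)] with y hfy hgy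
    exact pd_add (hfy.differentiableAt two_ne_zero) (hgy.differentiableAt two_ne_zero) j
  simp only [lapl, fun j => (pd_congr_of_eventuallyEq (pd_add_near j) j).eq_of_nhds, fun j =>
    pd_add (differentiableAt_pd hf j) (differentiableAt_pd hg j) j]
  ring

theorem lapl_const_mul (c : ℝ) (f : E2 → ℝ) (x : E2) :
    lapl (fun y => c * f y) x = c * lapl f x := by
  have pd_fun (j : Fin 2) : pd j (fun y => c * f y) = fun y => c * pd j f y :=
    funext (pd_const_mul j c f)
  simp only [lapl, pd_fun, pd_const_mul]
  ring

theorem lapl_norm_sq (x : E2) : lapl (fun y => ‖y‖ ^ 2) x = 4 := by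
  have pd_norm_sq (j : Fin 2) : pd j (fun y => ‖y‖ ^ 2) = fun y => 2 * y j := by
    ext y
    simp [pd, (hasStrictFDerivAt_norm_sq y).hasFDerivAt.fderiv, EuclideanSpace.inner_single_right]
  have pd_coord (j : Fin 2) : pd j (fun y => y j) x = 1 := by
    have : fderiv ℝ (fun y : E2 => y j) x = EuclideanSpace.proj j :=
      (EuclideanSpace.proj (𝕜 := ℝ) j).fderiv
    simp [pd, this]
  simp only [lapl, pd_norm_sq, pd_const_mul, pd_coord]
  norm_num

end PartialDerivatives

/-! ### Circle averages and superharmonic functions -/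

/-- The unit vector of polar angle `φ`. -/
noncomputable def polarDir (φ : ℝ) : E2 := !₂[Real.cos φ, Real.sin φ]

/-- The derivative of `polarDir`: the unit tangent to the circle at polar angle `φ`. -/
noncomputable def polarTangent (φ : ℝ) : E2 := !₂[-Real.sin φ, Real.cos φ]

section PolarFrame

@[simp] theorem polarDir_zero (φ : ℝ) : polarDir φ 0 = Real.cos φ := rfl
@[simp] theorem polarDir_one (φ : ℝ) : polarDir φ 1 = Real.sin φ := rfl
@[simp] theorem polarTangent_zero (φ : ℝ) : polarTangent φ 0 = -Real.sin φ := rfl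
@[simp] theorem polarTangent_one (φ : ℝ) : polarTangent φ 1 = Real.cos φ := rfl

@[simp] theorem norm_polarDir (φ : ℝ) : ‖polarDir φ‖ = 1 := by
  simp [EuclideanSpace.norm_eq, Fin.sum_univ_two]

theorem norm_smul_polarDir (r φ : ℝ) : ‖r • polarDir φ‖ = |r| := by
  simp [norm_smul]

theorem hasDerivAt_polarDir (φ : ℝ) : HasDerivAt polarDir (polarTangent φ) φ := by
  refine (PiLp.continuousLinearEquiv 2 ℝ fun _ : Fin 2 => ℝ).symm.hasFDerivAt.comp_hasDerivAt φ
    (f := fun φ => ![Real.cos φ, Real.sin φ]) (hasDerivAt_pi.2 fun j => ?_)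
  fin_cases j
  · exact Real.hasDerivAt_cos φ
  · exact Real.hasDerivAt_sin φ

theorem hasDerivAt_polarTangent (φ : ℝ) : HasDerivAt polarTangent (-polarDir φ) φ := by
  have coords : HasDerivAt (fun φ => ![-Real.sin φ, Real.cos φ]) ![-Real.cos φ, -Real.sin φ] φ := by
    refine hasDerivAt_pi.2 fun j => ?_
    fin_cases j
    · exact (Real.hasDerivAt_sin φ).fun_neg
    · exact Real.hasDerivAt_cos φ
  refine ((PiLp.continuousLinearEquiv 2 ℝ fun _ : Fin 2 => ℝ).symm.hasFDerivAt.comp_hasDerivAt φ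
    coords).congr_deriv ?_
  ext j; fin_cases j <;> simp [polarDir]

@[fun_prop] theorem continuous_polarDir : Continuous polarDir :=
  continuous_iff_continuousAt.2 fun φ => (hasDerivAt_polarDir φ).continuousAt

@[fun_prop] theorem continuous_polarTangent : Continuous polarTangent :=
  continuous_iff_continuousAt.2 fun φ => (hasDerivAt_polarTangent φ).continuousAt

theorem polarDir_neg_pi : polarDir (-π) = polarDir π := by simp [polarDir]

theorem polarTangent_neg_pi : polarTangent (-π) = polarTangent π := by simp [polarTangent]

theorem hasDerivAt_add_smul_polarDir (x : E2) (r φ : ℝ) :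
    HasDerivAt (fun r : ℝ => x + r • polarDir φ) (polarDir φ) r := by
  simpa using ((hasDerivAt_id r).smul_const (polarDir φ)).const_add x

theorem hasDerivAt_add_smul_polarDir_angle (x : E2) (r φ : ℝ) :
    HasDerivAt (fun φ : ℝ => x + r • polarDir φ) (r • polarTangent φ) φ :=
  ((hasDerivAt_polarDir φ).const_smul r).const_add x

theorem fderiv_fderiv_polarDir_add_polarTangent {f : E2 → ℝ} {x : E2} (hf : ContDiffAt ℝ 2 f x)
    (φ : ℝ) :
    fderiv ℝ (fderiv ℝ f) x (polarDir φ) (polarDir φ) +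
      fderiv ℝ (fderiv ℝ f) x (polarTangent φ) (polarTangent φ) = lapl f x := by
  simp only [fderiv_fderiv_apply_apply hf, Fin.sum_univ_two, polarDir_zero, polarDir_one,
    polarTangent_zero, polarTangent_one, lapl]
  linear_combination (pd 0 (pd 0 f) x + pd 1 (pd 1 f) x) * Real.sin_sq_add_cos_sq φ

theorem integral_eq_integral_polar (f : E2 → ℝ) :
    ∫ y, f y = ∫ p in Set.Ioi 0 ×ˢ Set.Ioo (-π) π, p.1 * f (p.1 • polarDir p.2) := by
  have toLp_integral := (PiLp.volume_preserving_toLp (Fin 2)).integral_comp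
    (MeasurableEquiv.toLp 2 (Fin 2 → ℝ)).measurableEmbedding f
  have prod_integral := (volume_preserving_finTwoArrow ℝ).symm.integral_comp
    (MeasurableEquiv.finTwoArrow (α := ℝ)).symm.measurableEmbedding fun y => f (WithLp.toLp 2 y)
  rw [← toLp_integral, ← prod_integral, ← integral_comp_polarCoord_symm]
  congr 1 with p
  simp only [smul_eq_mul]
  congr 2
  ext i; fin_cases i <;> simp [MeasurableEquiv.finTwoArrow]

theorem integral_eq_integral_Ioi_integral_polar {f : E2 → ℝ}
    (hf : IntegrableOn (fun p : ℝ × ℝ => p.1 * f (p.1 • polarDir p.2))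
      (Set.Ioi 0 ×ˢ Set.Ioo (-π) π)) :
    ∫ y, f y = ∫ r in Set.Ioi (0 : ℝ), r * ∫ φ in (-π)..π, f (r • polarDir φ) := by
  rw [integral_eq_integral_polar]
  rw [Measure.volume_eq_prod] at hf ⊢
  rw [setIntegral_prod _ hf]
  congr 1 with r
  rw [intervalIntegral.integral_of_le (by linarith [Real.pi_pos]), integral_Ioc_eq_integral_Ioo,
    integral_const_mul]

end PolarFrame

/-- The integral of `z` over the circle of centre `x` and radius `r`, with respect to the angle. -/
noncomputable def angularIntegral (z : E2 → ℝ) (x : E2) (r : ℝ) : ℝ :=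
  ∫ φ in (-π)..π, z (x + r • polarDir φ)

/-- The integral over the circle of centre `x` and radius `r`, with respect to the angle, of the
derivative of `z` in the outer normal direction. -/
noncomputable def radialFlux (z : E2 → ℝ) (x : E2) (r : ℝ) : ℝ :=
  ∫ φ in (-π)..π, fderiv ℝ z (x + r • polarDir φ) (polarDir φ)

section CircleIntegrals

variable {z : E2 → ℝ}

theorem hasDerivAt_intervalIntegral_of_continuous {G G' : ℝ → ℝ → ℝ}
    (hG : Continuous (Function.uncurry G)) (hG' : Continuous (Function.uncurry G'))
    (hderiv : ∀ r φ, HasDerivAt (fun r => G r φ) (G' r φ) r) (a b r : ℝ) :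
    HasDerivAt (fun r => ∫ φ in a..b, G r φ) (∫ φ in a..b, G' r φ) r := by
  obtain ⟨M, hM⟩ := ((isCompact_Icc (a := r - 1) (b := r + 1)).prod
    (isCompact_uIcc (a := a) (b := b))).exists_bound_of_continuousOn hG'.continuousOn
  refine (intervalIntegral.hasDerivAt_integral_of_dominated_loc_of_deriv_le (F' := G')
    (bound := fun _ => M) (Icc_mem_nhds (by linarith) (by linarith))
    (.of_forall fun t => ?_) ?_ ?_ (.of_forall fun φ hφ t ht => hM (t, φ) ⟨ht, ?_⟩)
    intervalIntegrable_const (.of_forall fun φ _ t _ => hderiv t φ)).2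
  · exact (hG.uncurry_left t).aestronglyMeasurable
  · exact (hG.uncurry_left r).intervalIntegrable _ _
  · exact (hG'.uncurry_left r).aestronglyMeasurable
  · exact Set.uIoc_subset_uIcc hφ

theorem hasDerivAt_angularIntegral (hz : ContDiff ℝ 1 z) (x : E2) (r : ℝ) :
    HasDerivAt (angularIntegral z x) (radialFlux z x r) r := by
  have := hz.continuous_fderiv one_ne_zero
  refine hasDerivAt_intervalIntegral_of_continuous
    (G' := fun r φ => fderiv ℝ z (x + r • polarDir φ) (polarDir φ)) ?_ ?_ (fun r φ => ?_) _ _ _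
  · simp only [Function.uncurry_def]; fun_prop
  · simp only [Function.uncurry_def]; fun_prop
  · exact (hz.differentiable one_ne_zero _).hasFDerivAt.comp_hasDerivAt r
      (hasDerivAt_add_smul_polarDir x r φ)

theorem continuous_angularIntegral (hz : ContDiff ℝ 1 z) (x : E2) :
    Continuous (angularIntegral z x) :=
  continuous_iff_continuousAt.2 fun r => (hasDerivAt_angularIntegral hz x r).continuousAt

theorem continuous_radialFlux (hz : ContDiff ℝ 1 z) (x : E2) : Continuous (radialFlux z x) := by
  have := hz.continuous_fderiv one_ne_zero
  apply intervalIntegral.continuous_parametric_intervalIntegral_of_continuous'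
  simp only [Function.uncurry_def]
  fun_prop

theorem hasDerivAt_radialFlux (hz : ContDiff ℝ 2 z) (x : E2) (r : ℝ) :
    HasDerivAt (radialFlux z x)
      (∫ φ in (-π)..π, fderiv ℝ (fderiv ℝ z) (x + r • polarDir φ) (polarDir φ) (polarDir φ)) r := by
  have hz' : ContDiff ℝ 1 (fderiv ℝ z) := hz.fderiv_right (by norm_num)
  have := hz'.continuous
  have := hz'.continuous_fderiv one_ne_zero
  refine hasDerivAt_intervalIntegral_of_continuous (G' := fun r φ =>
    fderiv ℝ (fderiv ℝ z) (x + r • polarDir φ) (polarDir φ) (polarDir φ))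
    ?_ ?_ (fun r φ => ?_) _ _ _
  · simp only [Function.uncurry_def]; fun_prop
  · simp only [Function.uncurry_def]; fun_prop
  · have := (hz'.differentiable one_ne_zero _).hasFDerivAt.comp_hasDerivAt r
      (hasDerivAt_add_smul_polarDir x r φ)
    simpa using this.clm_apply (hasDerivAt_const r (polarDir φ))

theorem radialFlux_eq_mul_integral_polarTangent (hz : ContDiff ℝ 2 z) (x : E2) (r : ℝ) :
    radialFlux z x r = r * ∫ φ in (-π)..π,
      fderiv ℝ (fderiv ℝ z) (x + r • polarDir φ) (polarTangent φ) (polarTangent φ) := by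
  have hz' : ContDiff ℝ 1 (fderiv ℝ z) := hz.fderiv_right (by norm_num)
  have := hz'.continuous
  have := hz'.continuous_fderiv one_ne_zero
  have hderiv (φ : ℝ) : HasDerivAt (fun φ => fderiv ℝ z (x + r • polarDir φ) (polarTangent φ))
      (r * fderiv ℝ (fderiv ℝ z) (x + r • polarDir φ) (polarTangent φ) (polarTangent φ) -
        fderiv ℝ z (x + r • polarDir φ) (polarDir φ)) φ := by
    have := (hz'.differentiable one_ne_zero _).hasFDerivAt.comp_hasDerivAt φ
      (hasDerivAt_add_smul_polarDir_angle x r φ)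
    simpa [sub_eq_add_neg] using this.clm_apply (hasDerivAt_polarTangent φ)
  have periodic := intervalIntegral.integral_eq_sub_of_hasDerivAt (a := -π) (b := π)
    (fun φ _ => hderiv φ) (Continuous.intervalIntegrable (by fun_prop) _ _)
  rw [intervalIntegral.integral_sub (Continuous.intervalIntegrable (by fun_prop) _ _)
    (Continuous.intervalIntegrable (by fun_prop) _ _), intervalIntegral.integral_const_mul,
    polarDir_neg_pi, polarTangent_neg_pi, sub_self] at periodic
  exact (sub_eq_zero.1 periodic).symm

theorem hasDerivAt_mul_radialFlux (hz : ContDiff ℝ 2 z) (x : E2) (r : ℝ) :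
    HasDerivAt (fun r => r * radialFlux z x r) (r * angularIntegral (lapl z) x r) r := by
  have hz' : ContDiff ℝ 1 (fderiv ℝ z) := hz.fderiv_right (by norm_num)
  have := hz'.continuous_fderiv one_ne_zero
  refine ((hasDerivAt_id' r).fun_mul (hasDerivAt_radialFlux hz x r)).congr_deriv ?_
  rw [radialFlux_eq_mul_integral_polarTangent hz, one_mul, ← mul_add, add_comm,
    ← intervalIntegral.integral_add (Continuous.intervalIntegrable (by fun_prop) _ _)
    (Continuous.intervalIntegrable (by fun_prop) _ _)]
  simp only [fderiv_fderiv_polarDir_add_polarTangent hz.contDiffAt, angularIntegral]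

@[simp] theorem angularIntegral_zero_radius (z : E2 → ℝ) (x : E2) :
    angularIntegral z x 0 = 2 * π * z x := by
  simp only [angularIntegral, zero_smul, add_zero, intervalIntegral.integral_const, smul_eq_mul]
  ring

theorem angularIntegral_mono {w : E2 → ℝ} (hz : Continuous z) (hw : Continuous w) {x : E2} {r : ℝ}
    (hle : ∀ y ∈ sphere x |r|, z y ≤ w y) : angularIntegral z x r ≤ angularIntegral w x r := by
  refine intervalIntegral.integral_mono_on (by linarith [Real.pi_pos])
    (Continuous.intervalIntegrable (by fun_prop) _ _)
    (Continuous.intervalIntegrable (by fun_prop) _ _) fun φ _ => hle _ ?_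
  rw [mem_sphere, dist_eq_norm, add_sub_cancel_left, norm_smul_polarDir]

theorem angularIntegral_const (c : ℝ) (x : E2) (r : ℝ) :
    angularIntegral (fun _ => c) x r = 2 * π * c := by
  simp only [angularIntegral, intervalIntegral.integral_const, smul_eq_mul]
  ring

theorem monotoneOn_mul_radialFlux_add (hz : ContDiff ℝ 2 z) {x : E2} {c t : ℝ}
    (hlapl : ∀ y ∈ ball x t, -c ≤ lapl z y) :
    MonotoneOn (fun r => r * radialFlux z x r + π * c * r ^ 2) (Set.Icc 0 t) := by
  have hderiv (r : ℝ) : HasDerivAt (fun r => r * radialFlux z x r + π * c * r ^ 2)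
      (r * angularIntegral (lapl z) x r + π * c * (2 * r)) r := by
    simpa using (hasDerivAt_mul_radialFlux hz x r).fun_add
      (((hasDerivAt_id' r).fun_pow 2).const_mul (π * c))
  refine monotoneOn_of_deriv_nonneg (convex_Icc _ _)
    (fun r _ => (hderiv r).continuousAt.continuousWithinAt)
    (fun r _ => (hderiv r).differentiableAt.differentiableWithinAt) fun r hr => ?_
  rw [interior_Icc] at hr
  rw [(hderiv r).deriv]
  have lower : angularIntegral (fun _ => -c) x r ≤ angularIntegral (lapl z) x r :=
    angularIntegral_mono continuous_const (continuous_lapl hz) fun y hy => hlapl y <| by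
      rw [mem_sphere, abs_of_pos hr.1] at hy
      rw [mem_ball, hy]
      exact hr.2
  rw [angularIntegral_const] at lower
  nlinarith [mul_le_mul_of_nonneg_left lower hr.1.le]

theorem monotoneOn_angularIntegral_add (hz : ContDiff ℝ 2 z) {x : E2} {c t : ℝ}
    (hlapl : ∀ y ∈ ball x t, -c ≤ lapl z y) :
    MonotoneOn (fun r => angularIntegral z x r + π * c * r ^ 2 / 2) (Set.Icc 0 t) := by
  have hderiv (r : ℝ) : HasDerivAt (fun r => angularIntegral z x r + π * c * r ^ 2 / 2)
      (radialFlux z x r + π * c * r) r := by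
    refine ((hasDerivAt_angularIntegral (hz.of_le one_le_two) x r).fun_add
      ((((hasDerivAt_id' r).fun_pow 2).const_mul (π * c)).div_const 2)).congr_deriv ?_
    simp only [Nat.cast_ofNat, Nat.add_one_sub_one, pow_one, mul_one]
    ring
  refine monotoneOn_of_deriv_nonneg (convex_Icc _ _)
    (fun r _ => (hderiv r).continuousAt.continuousWithinAt)
    (fun r _ => (hderiv r).differentiableAt.differentiableWithinAt) fun r hr => ?_
  rw [interior_Icc] at hr
  rw [(hderiv r).deriv]
  have flux_nonneg := monotoneOn_mul_radialFlux_add hz hlapl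
    ⟨le_rfl, (hr.1.trans hr.2).le⟩ ⟨hr.1.le, hr.2.le⟩ hr.1.le
  rw [← mul_nonneg_iff_of_pos_left hr.1]
  simp only [zero_mul, ne_eq, OfNat.ofNat_ne_zero, not_false_eq_true, zero_pow, mul_zero,
    add_zero] at flux_nonneg
  linarith

end CircleIntegrals

section MeanValue

variable {z : E2 → ℝ}

theorem setIntegral_norm_sub_mem (hz : Continuous z) (x : E2) {S : Set ℝ} (hS : MeasurableSet S)
    (hbdd : BddAbove S) :
    ∫ y in {y | ‖y - x‖ ∈ S}, z y = ∫ r in Set.Ioi 0 ∩ S, r * angularIntegral z x r := by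
  obtain ⟨T, hT⟩ := hbdd
  set F : E2 → ℝ := {v : E2 | ‖v‖ ∈ S}.indicator fun v => z (x + v)
  have polar_eq {r : ℝ} (hr : 0 < r) (φ : ℝ) :
      F (r • polarDir φ) = S.indicator (fun r => z (x + r • polarDir φ)) r := by
    by_cases h : r ∈ S <;> simp [F, Set.indicator, norm_smul, abs_of_pos hr, h]
  have shift : ∫ y in {y | ‖y - x‖ ∈ S}, z y = ∫ v, F v := by
    have meas : MeasurableSet {y | ‖y - x‖ ∈ S} :=
      (measurable_id.sub_const x).norm hS
    rw [← integral_add_left_eq_self F (-x), ← integral_indicator meas]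
    refine integral_congr_ae (.of_forall fun y => ?_)
    simp [F, Set.indicator, neg_add_eq_sub]
  rw [shift, integral_eq_integral_Ioi_integral_polar, ← setIntegral_indicator hS]
  · refine setIntegral_congr_fun measurableSet_Ioi fun r hr => ?_
    by_cases hrS : r ∈ S <;> simp [polar_eq (Set.mem_Ioi.1 hr), hrS, angularIntegral]
  · have meas : MeasurableSet (Prod.fst ⁻¹' S : Set (ℝ × ℝ)) := measurable_fst hS
    have indicator_eq : Set.EqOn
        ((Prod.fst ⁻¹' S).indicator fun p : ℝ × ℝ => p.1 * z (x + p.1 • polarDir p.2))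
        (fun p => p.1 * F (p.1 • polarDir p.2)) (Set.Ioi 0 ×ˢ Set.Ioo (-π) π) := by
      rintro ⟨r, φ⟩ ⟨hr, -⟩
      by_cases hrS : r ∈ S <;> simp [polar_eq (Set.mem_Ioi.1 hr), hrS]
    refine IntegrableOn.congr_fun ?_ indicator_eq (measurableSet_Ioi.prod measurableSet_Ioo)
    rw [IntegrableOn, integrable_indicator_iff meas, IntegrableOn, Measure.restrict_restrict meas]
    refine (Continuous.continuousOn (by fun_prop)).integrableOn_compact
      ((isCompact_Icc (a := 0) (b := T)).prod (isCompact_Icc (a := -π) (b := π))) |>.mono_set ?_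
    rintro ⟨r, φ⟩ ⟨hrS, hr, hφ⟩
    exact ⟨⟨le_of_lt hr, hT hrS⟩, Set.Ioo_subset_Icc_self hφ⟩

theorem le_setIntegral_ball_of_neg_le_lapl (hz : ContDiff ℝ 2 z) {x : E2} {c t : ℝ} (ht : 0 ≤ t)
    (hlapl : ∀ y ∈ ball x t, -c ≤ lapl z y) :
    π * t ^ 2 * z x - π * c * t ^ 4 / 8 ≤ ∫ y in ball x t, z y := by
  have ball_eq : ball x t = {y | ‖y - x‖ ∈ Set.Iio t} := by
    ext y; simp [dist_eq_norm]
  have angular_cont := continuous_angularIntegral (hz.of_le one_le_two) x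
  rw [ball_eq, setIntegral_norm_sub_mem hz.continuous x measurableSet_Iio bddAbove_Iio,
    Set.Ioi_inter_Iio, ← integral_Ioc_eq_integral_Ioo, ← intervalIntegral.integral_of_le ht]
  calc π * t ^ 2 * z x - π * c * t ^ 4 / 8
      = ∫ r in (0 : ℝ)..t, (2 * π * z x * r - π * c / 2 * r ^ 3) := by
        rw [intervalIntegral.integral_sub (Continuous.intervalIntegrable (by fun_prop) _ _)
          (Continuous.intervalIntegrable (by fun_prop) _ _), intervalIntegral.integral_const_mul,
          intervalIntegral.integral_const_mul, integral_id, integral_pow]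
        norm_num
        ring
    _ ≤ ∫ r in (0 : ℝ)..t, r * angularIntegral z x r := by
        refine intervalIntegral.integral_mono_on ht
          (Continuous.intervalIntegrable (by fun_prop) _ _)
          (Continuous.intervalIntegrable (by fun_prop) _ _) fun r hr => ?_
        have mono := monotoneOn_angularIntegral_add hz hlapl ⟨le_rfl, ht⟩ hr hr.1
        simp only [angularIntegral_zero_radius] at mono
        nlinarith [mul_le_mul_of_nonneg_left mono hr.1]

theorem angularIntegral_antitoneOn (hz : ContDiff ℝ 2 z) {x : E2} {t : ℝ}
    (hlapl : ∀ y ∈ ball x t, lapl z y ≤ 0) :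
    AntitoneOn (angularIntegral z x) (Set.Icc 0 t) := by
  have mono := monotoneOn_angularIntegral_add hz.neg (c := 0) (x := x) (t := t) fun y hy => by
    change -0 ≤ lapl (fun y => -z y) y
    rw [lapl_neg]
    linarith [hlapl y hy]
  intro r hr s hs hrs
  simpa [angularIntegral] using mono hr hs hrs

theorem setIntegral_annulus_le_of_lapl_nonpos (hz : ContDiff ℝ 2 z) {x : E2} {a b B : ℝ}
    (ha : 0 < a) (hab : a ≤ b) (hB : 0 ≤ B) (hlapl : ∀ y ∈ ball x b, lapl z y ≤ 0)
    (hsphere : ∀ y ∈ sphere x a, z y ≤ B) :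
    ∫ y in {y | ‖y - x‖ ∈ Set.Icc a b}, z y ≤ 2 * π * B * b ^ 2 := by
  have angular_cont := continuous_angularIntegral (hz.of_le one_le_two) x
  have angular_le : angularIntegral z x a ≤ 2 * π * B := by
    rw [← angularIntegral_const B x a]
    exact angularIntegral_mono hz.continuous continuous_const (by rwa [abs_of_pos ha])
  have pos_radii : Set.Ioi 0 ∩ Set.Icc a b = Set.Icc a b :=
    Set.inter_eq_right.2 fun r hr => ha.trans_le hr.1
  rw [setIntegral_norm_sub_mem hz.continuous x measurableSet_Icc bddAbove_Icc, pos_radii,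
    integral_Icc_eq_integral_Ioc, ← intervalIntegral.integral_of_le hab]
  calc ∫ r in a..b, r * angularIntegral z x r
      ≤ ∫ r in a..b, b * (2 * π * B) := by
        refine intervalIntegral.integral_mono_on hab
          (Continuous.intervalIntegrable (by fun_prop) _ _) intervalIntegrable_const fun r hr => ?_
        have hr0 : 0 ≤ r := ha.le.trans hr.1
        have decreasing := angularIntegral_antitoneOn hz hlapl ⟨ha.le, hab⟩ ⟨hr0, hr.2⟩ hr.1
        calc r * angularIntegral z x r
            ≤ r * (2 * π * B) := by gcongr; exact decreasing.trans angular_le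
          _ ≤ b * (2 * π * B) := by gcongr; exact hr.2
    _ ≤ 2 * π * B * b ^ 2 := by
        rw [intervalIntegral.integral_const, smul_eq_mul]
        have : 0 ≤ π * B * (a * b) := by have := ha.trans_le hab; positivity
        nlinarith

end MeanValue

section MinimumPrinciple

theorem deriv_deriv_nonneg_of_isLocalMin {f : ℝ → ℝ} {a : ℝ} (hmin : IsLocalMin f a)
    (hf : ContinuousAt f a) : 0 ≤ deriv (deriv f) a := by
  by_contra! hneg
  have hmax : IsLocalMax f a := isLocalMax_of_deriv_deriv_neg hneg hmin.deriv_eq_zero hf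
  have const : f =ᶠ[𝓝 a] fun _ => f a := by
    filter_upwards [hmin, hmax] with y h₁ h₂ using le_antisymm h₂ h₁
  simp [const.deriv.deriv_eq] at hneg

theorem lapl_nonneg_of_isLocalMin {f : E2 → ℝ} {x : E2} (hf : ContDiffAt ℝ 2 f x)
    (hmin : IsLocalMin f x) : 0 ≤ lapl f x := by
  have key (j : Fin 2) : 0 ≤ pd j (pd j f) x := by
    set e : E2 := EuclideanSpace.single j 1
    have line_deriv (t : ℝ) : HasDerivAt (fun t : ℝ => x + t • e) e t := by
      simpa using ((hasDerivAt_id t).smul_const e).const_add x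
    have line_cont : Continuous fun t : ℝ => x + t • e := by fun_prop
    have tendsto_line : Tendsto (fun t : ℝ => x + t • e) (𝓝 0) (𝓝 x) := by
      simpa using line_cont.tendsto 0
    have deriv_eq : deriv (fun t : ℝ => f (x + t • e)) =ᶠ[𝓝 0] fun t => pd j f (x + t • e) := by
      have diff_near : ∀ᶠ y in 𝓝 x, DifferentiableAt ℝ f y :=
        (hf.eventually (by simp)).mono fun y hy => hy.differentiableAt two_ne_zero
      filter_upwards [tendsto_line.eventually diff_near] with t ht
      exact (ht.hasFDerivAt.comp_hasDerivAt t (line_deriv t)).deriv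
    have pd_diff : DifferentiableAt ℝ (pd j f) (x + (0 : ℝ) • e) := by
      simpa using differentiableAt_pd hf j
    have second_deriv : deriv (deriv fun t : ℝ => f (x + t • e)) 0 = pd j (pd j f) x := by
      rw [deriv_eq.deriv_eq]
      refine (pd_diff.hasFDerivAt.comp_hasDerivAt (0 : ℝ) (line_deriv 0)).deriv.trans ?_
      rw [zero_smul, add_zero, pd]
    rw [← second_deriv]
    refine deriv_deriv_nonneg_of_isLocalMin ?_ ?_
    · simpa [IsLocalMin, IsMinFilter] using tendsto_line.eventually hmin
    · exact ContinuousAt.comp (by simpa using hf.continuousAt) line_cont.continuousAt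
  exact add_nonneg (key 0) (key 1)

theorem nonneg_of_lapl_nonpos {K : Set E2} {u : E2 → ℝ} (hK : IsCompact K)
    (hcont : ContinuousOn u K) (hdiff : ContDiffOn ℝ 2 u (interior K))
    (hlapl : ∀ x ∈ interior K, lapl u x ≤ 0)
    (hfrontier : ∀ x ∈ frontier K, 0 ≤ u x) : ∀ x ∈ K, 0 ≤ u x := by
  intro x₁ hx₁
  by_contra! hneg
  obtain ⟨T, hT⟩ := hK.isBounded.exists_norm_le
  set ε := -u x₁ / (2 * (T ^ 2 + 1)) with hε
  have hε0 : 0 < ε := div_pos (neg_pos.2 hneg) (by positivity)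
  have hεT : u x₁ + ε * T ^ 2 < 0 := by
    rw [hε]
    field_simp
    nlinarith [sq_nonneg T]
  obtain ⟨x₀, hx₀, hmin⟩ := hK.exists_isMinOn ⟨x₁, hx₁⟩
    (hcont.add (f := u) (g := fun y => -ε * ‖y‖ ^ 2) (by fun_prop))
  have u_neg : u x₀ < 0 := by
    have le_at_x₁ : u x₀ + -ε * ‖x₀‖ ^ 2 ≤ u x₁ + -ε * ‖x₁‖ ^ 2 := hmin hx₁
    have : ε * ‖x₀‖ ^ 2 ≤ ε * T ^ 2 := by gcongr; exact hT x₀ hx₀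
    have : 0 ≤ ε * ‖x₁‖ ^ 2 := by positivity
    linarith
  have hx₀int : x₀ ∈ interior K := by
    by_contra hx₀int
    exact u_neg.not_ge (hfrontier x₀ ⟨subset_closure hx₀, hx₀int⟩)
  have hK_nhds : interior K ∈ 𝓝 x₀ := isOpen_interior.mem_nhds hx₀int
  have lapl_perturbed := lapl_nonneg_of_isLocalMin
    ((hdiff.contDiffAt hK_nhds).add (contDiff_const.mul (contDiff_norm_sq ℝ)).contDiffAt)
    (hmin.isLocalMin (mem_interior_iff_mem_nhds.1 hx₀int))
  rw [lapl_add (hdiff.contDiffAt hK_nhds) (contDiff_const.mul (contDiff_norm_sq ℝ)).contDiffAt,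
    lapl_const_mul, lapl_norm_sq] at lapl_perturbed
  linarith [hlapl x₀ hx₀int]

theorem nonneg_of_lapl_nonpos_of_eq_zero_on_sphere {u : E2 → ℝ} {x : E2} {ρ : ℝ} (hρ : ρ ≠ 0)
    (hu : ContDiffOn ℝ 2 u (closedBall x ρ)) (hlapl : ∀ y ∈ ball x ρ, lapl u y ≤ 0)
    (hsphere : ∀ y ∈ sphere x ρ, u y = 0) {y : E2} (hy : y ∈ closedBall x ρ) : 0 ≤ u y := by
  refine nonneg_of_lapl_nonpos (isCompact_closedBall x ρ) hu.continuousOn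
    (hu.mono interior_subset) ?_ ?_ y hy
  · rwa [interior_closedBall x hρ]
  · rw [frontier_closedBall x hρ]
    exact fun z hz => (hsphere z hz).ge

end MinimumPrinciple

/-! ### The gradient of the logarithmic kernel -/

/-- The partial derivative of `log ‖y‖` in the direction `j`, set to `0` at the origin. -/
noncomputable def gradKernel (j : Fin 2) (y : E2) : ℝ := y j / ‖y‖ ^ 2

section GradKernel

theorem abs_gradKernel_le (j : Fin 2) (y : E2) : |gradKernel j y| ≤ ‖y‖⁻¹ := by
  rcases eq_or_ne y 0 with rfl | hy
  · simp [gradKernel]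
  · have : 0 < ‖y‖ := norm_pos_iff.2 hy
    rw [gradKernel, abs_div, abs_of_pos (by positivity : 0 < ‖y‖ ^ 2), div_le_iff₀ (by positivity)]
    calc |y j| ≤ ‖y‖ := PiLp.norm_apply_le y j
      _ = ‖y‖⁻¹ * ‖y‖ ^ 2 := by field_simp

theorem gradKernel_neg (j : Fin 2) (y : E2) : gradKernel j (-y) = -gradKernel j y := by
  simp [gradKernel, neg_div]

theorem gradKernel_smul (j : Fin 2) (R : ℝ) (y : E2) :
    gradKernel j (R • y) = R⁻¹ * gradKernel j y := by
  simp only [gradKernel, PiLp.smul_apply, smul_eq_mul, norm_smul, mul_pow, Real.norm_eq_abs, sq_abs]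
  rcases eq_or_ne R 0 with rfl | hR
  · simp
  · field_simp

@[fun_prop] theorem measurable_gradKernel (j : Fin 2) : Measurable (gradKernel j) := by
  unfold gradKernel; fun_prop

theorem contDiffAt_gradKernel {n : WithTop ℕ∞} (j : Fin 2) {y : E2} (hy : y ≠ 0) :
    ContDiffAt ℝ n (gradKernel j) y := by
  have coord : ContDiff ℝ n fun y : E2 => y j := by fun_prop
  exact coord.contDiffAt.div (contDiff_norm_sq ℝ).contDiffAt (by positivity)

theorem sum_mul_gradKernel_self {y : E2} (hy : y ≠ 0) : ∑ j, y j * gradKernel j y = 1 := by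
  have : ‖y‖ ^ 2 ≠ 0 := by positivity
  have norm_sq := EuclideanSpace.real_norm_sq_eq y
  simp only [gradKernel, Fin.sum_univ_two] at norm_sq ⊢
  field_simp
  exact norm_sq.symm

/-- The kernel is a coordinate of the inversion in the unit circle, which distorts distances by the
factor `(‖y‖ * ‖z‖)⁻¹`. -/
theorem abs_gradKernel_sub_le (j : Fin 2) {y z : E2} (hy : y ≠ 0) (hz : z ≠ 0) :
    |gradKernel j y - gradKernel j z| ≤ ‖y - z‖ / (‖y‖ * ‖z‖) := by
  have inversion_dist := dist_div_norm_sq_smul hy hz 1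
  rw [dist_eq_norm, dist_eq_norm] at inversion_dist
  have coord : gradKernel j y - gradKernel j z =
      ((1 / ‖y‖) ^ 2 • y - (1 / ‖z‖) ^ 2 • z) j := by
    simp [gradKernel]; ring
  rw [coord]
  refine (PiLp.norm_apply_le _ j).trans (inversion_dist.le.trans_eq ?_)
  ring

end GradKernel

section KernelIntegrability

theorem setIntegral_inv_norm_sub_ball (x : E2) {t : ℝ} (ht : 0 ≤ t) :
    ∫ y in ball x t, ‖x - y‖⁻¹ = 2 * π * t := by
  have indicator_eq (y : E2) : (ball x t).indicator (fun y => ‖x - y‖⁻¹) y =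
      (Set.Iio t).indicator (fun s => s⁻¹) ‖x - y‖ := by
    simp [Set.indicator, dist_comm y x, dist_eq_norm]
  have radial_eq : Set.EqOn (fun s : ℝ => s ^ (2 - 1) • (Set.Iio t).indicator (fun s => s⁻¹) s)
      ((Set.Iio t).indicator 1) (Set.Ioi 0) := by
    intro s hs
    by_cases h : s < t <;> simp [h, (Set.mem_Ioi.1 hs).ne']
  rw [← integral_indicator measurableSet_ball, integral_congr_ae (.of_forall indicator_eq),
    integral_sub_left_eq_self (fun y : E2 => (Set.Iio t).indicator (fun s => s⁻¹) ‖y‖),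
    integral_fun_norm_addHaar, finrank_euclideanSpace_fin,
    setIntegral_congr_fun measurableSet_Ioi radial_eq, setIntegral_indicator measurableSet_Iio]
  simp [Measure.real, Set.Ioi_inter_Iio, ht, mul_assoc, Real.pi_pos.le]

theorem integrableOn_inv_norm_sub_ball (x : E2) (t : ℝ) :
    IntegrableOn (fun y => ‖x - y‖⁻¹) (ball x t) := by
  rcases le_or_gt t 0 with ht | ht
  · simp [ball_eq_empty.2 ht]
  · exact .of_integral_ne_zero (by rw [setIntegral_inv_norm_sub_ball x ht.le]; positivity)

theorem integrable_inv_norm_sub_mul {f : E2 → ℝ} (hf : Integrable f) {x : E2} {M t : ℝ}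
    (ht : 0 < t) (hM : ∀ y ∈ ball x t, |f y| ≤ M) : Integrable fun y => ‖x - y‖⁻¹ * f y := by
  have meas : AEStronglyMeasurable (fun y => ‖x - y‖⁻¹ * f y) volume :=
    (by fun_prop : Measurable fun y : E2 => ‖x - y‖⁻¹).aestronglyMeasurable.mul
      hf.aestronglyMeasurable
  rw [← integrableOn_univ, ← Set.union_compl_self (ball x t)]
  refine IntegrableOn.union ?_ ?_
  · refine ((integrableOn_inv_norm_sub_ball x t).mul_const M).mono' meas.restrict ?_
    filter_upwards [ae_restrict_mem measurableSet_ball] with y hy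
    rw [norm_mul, norm_inv, norm_norm]
    gcongr
    exact hM y hy
  · refine (hf.norm.const_mul t⁻¹).integrableOn.mono' meas.restrict ?_
    filter_upwards [ae_restrict_mem measurableSet_ball.compl] with y hy
    rw [norm_mul, norm_inv, norm_norm]
    gcongr
    simpa [dist_comm y x, dist_eq_norm] using hy

theorem integrable_gradKernel_sub_mul {f : E2 → ℝ} (hf : Integrable f) {x : E2} {M t : ℝ}
    (ht : 0 < t) (hM : ∀ y ∈ ball x t, |f y| ≤ M) (j : Fin 2) :
    Integrable fun y => gradKernel j (x - y) * f y := by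
  refine (integrable_inv_norm_sub_mul hf ht hM).norm.mono ?_ (.of_forall fun y => ?_)
  · exact ((measurable_gradKernel j).comp (measurable_const_sub x)).aestronglyMeasurable.mul
      hf.aestronglyMeasurable
  · rw [norm_norm, norm_mul, norm_mul, norm_inv, norm_norm]
    gcongr
    exact abs_gradKernel_le j _

end KernelIntegrability

section Representation

variable {f g : E2 → ℝ}

theorem integral_fderiv_polarTangent_eq_zero (hf : ContDiff ℝ 1 f) (x : E2) {r : ℝ} (hr : r ≠ 0) :
    ∫ φ in (-π)..π, fderiv ℝ f (x + r • polarDir φ) (polarTangent φ) = 0 := by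
  have := hf.continuous_fderiv one_ne_zero
  have hderiv (φ : ℝ) : HasDerivAt (fun φ => f (x + r • polarDir φ))
      (r * fderiv ℝ f (x + r • polarDir φ) (polarTangent φ)) φ := by
    have := (hf.differentiable one_ne_zero _).hasFDerivAt.comp_hasDerivAt φ
      (hasDerivAt_add_smul_polarDir_angle x r φ)
    simpa [Function.comp_def] using this
  have periodic := intervalIntegral.integral_eq_sub_of_hasDerivAt (a := -π) (b := π)
    (fun φ _ => hderiv φ) (Continuous.intervalIntegrable (by fun_prop) _ _)
  rw [polarDir_neg_pi, sub_self, intervalIntegral.integral_const_mul] at periodic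
  exact (mul_eq_zero.1 periodic).resolve_left hr

theorem integral_polarDir_mul_lapl (hg : ContDiff ℝ 2 g) (x : E2) {r : ℝ} (hr : r ≠ 0)
    (j : Fin 2) :
    ∫ φ in (-π)..π, polarDir φ j * lapl g (x + r • polarDir φ) = radialFlux (pd j g) x r := by
  have cont_lapl := continuous_lapl hg
  have contDiff_pd_g (k : Fin 2) : ContDiff ℝ 1 (pd k g) := contDiff_pd hg (by norm_num) k
  have (k : Fin 2) := (contDiff_pd_g k).continuous_fderiv one_ne_zero
  have cont_coord : Continuous fun φ => polarDir φ j := by fun_prop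
  rw [radialFlux, ← sub_eq_zero, ← intervalIntegral.integral_sub
    (Continuous.intervalIntegrable (by fun_prop) _ _)
    (Continuous.intervalIntegrable (by fun_prop) _ _)]
  fin_cases j
  · rw [← integral_fderiv_polarTangent_eq_zero (contDiff_pd_g 1) x hr]
    congr 1 with φ
    simp only [fderiv_apply_eq_sum_pd, Fin.sum_univ_two, lapl, Fin.zero_eta, polarDir_zero,
      polarDir_one, polarTangent_zero, polarTangent_one, pd_pd_comm hg.contDiffAt 0 1]
    ring
  · rw [← neg_zero, ← integral_fderiv_polarTangent_eq_zero (contDiff_pd_g 0) x hr,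
      ← intervalIntegral.integral_neg]
    congr 1 with φ
    simp only [fderiv_apply_eq_sum_pd, Fin.sum_univ_two, lapl, Fin.mk_one, polarDir_zero,
      polarDir_one, polarTangent_zero, polarTangent_one, pd_pd_comm hg.contDiffAt 0 1]
    ring

theorem hasCompactSupport_angularIntegral (hf : HasCompactSupport f) (x : E2) :
    HasCompactSupport (angularIntegral f x) := by
  obtain ⟨T, hT⟩ := hf.isCompact.isBounded.subset_closedBall x
  refine .of_support_subset_isCompact (isCompact_Icc (a := -T) (b := T)) fun r hr => ?_
  by_contra hrT
  refine hr (intervalIntegral.integral_zero_ae (.of_forall fun φ _ => ?_))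
  refine image_eq_zero_of_notMem_tsupport fun hmem => hrT (abs_le.1 ?_)
  simpa [norm_smul] using hT hmem

theorem integral_Ioi_radialFlux (hf : ContDiff ℝ 1 f) (hc : HasCompactSupport f) (x : E2) :
    ∫ r in Set.Ioi 0, radialFlux f x r = -(2 * π * f x) := by
  have deriv_eq : deriv (angularIntegral f x) = radialFlux f x :=
    funext fun r => (hasDerivAt_angularIntegral hf x r).deriv
  have contDiff_angular : ContDiff ℝ 1 (angularIntegral f x) :=
    contDiff_one_iff_deriv.2 ⟨fun r => (hasDerivAt_angularIntegral hf x r).differentiableAt,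
      deriv_eq ▸ continuous_radialFlux hf x⟩
  rw [← deriv_eq, (hasCompactSupport_angularIntegral hc x).integral_Ioi_deriv_eq contDiff_angular,
    angularIntegral_zero_radius]

theorem pd_eq_integral_gradKernel_mul_lapl (hg : ContDiff ℝ 2 g) (hc : HasCompactSupport g)
    (x : E2) (j : Fin 2) :
    pd j g x = -(1 / (2 * π)) * ∫ y, gradKernel j y * lapl g (x + y) := by
  have polar_eq {r : ℝ} (hr : 0 < r) (φ : ℝ) :
      r * (gradKernel j (r • polarDir φ) * lapl g (x + r • polarDir φ)) =
        polarDir φ j * lapl g (x + r • polarDir φ) := by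
    simp only [gradKernel, norm_smul_polarDir, sq_abs, PiLp.smul_apply, smul_eq_mul]
    field_simp
  have polar_integrable : IntegrableOn
      (fun p : ℝ × ℝ => p.1 * (gradKernel j (p.1 • polarDir p.2) * lapl g (x + p.1 • polarDir p.2)))
      (Set.Ioi 0 ×ˢ Set.Ioo (-π) π) := by
    obtain ⟨T, hT⟩ := (hasCompactSupport_lapl hc).isCompact.isBounded.subset_closedBall x
    have cont_lapl := continuous_lapl hg
    have cont : Continuous fun p : ℝ × ℝ => polarDir p.2 j * lapl g (x + p.1 • polarDir p.2) := by
      fun_prop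
    have on_compact := cont.continuousOn.integrableOn_compact (μ := volume)
      ((isCompact_Icc (a := 0) (b := T)).prod (isCompact_Icc (a := -π) (b := π)))
    have polar_measurable := (measurableSet_Ioi (a := (0 : ℝ))).prod
      (measurableSet_Ioo (a := -π) (b := π))
    refine (on_compact.of_forall_sdiff_eq_zero polar_measurable ?_).congr_fun
      (fun p hp => (polar_eq hp.1 p.2).symm) polar_measurable
    rintro ⟨r, φ⟩ ⟨⟨hr, hφ⟩, hn⟩
    refine mul_eq_zero_of_right _ (image_eq_zero_of_notMem_tsupport fun hmem => hn ?_)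
    have hrT : |r| ≤ T := by simpa [norm_smul] using hT hmem
    exact ⟨⟨le_of_lt hr, (le_abs_self r).trans hrT⟩, Set.Ioo_subset_Icc_self hφ⟩
  have flux : ∫ y, gradKernel j y * lapl g (x + y) = ∫ r in Set.Ioi 0, radialFlux (pd j g) x r := by
    rw [integral_eq_integral_Ioi_integral_polar polar_integrable]
    refine setIntegral_congr_fun measurableSet_Ioi fun r hr => ?_
    simp only [← integral_polarDir_mul_lapl hg x (ne_of_gt hr) j, ← polar_eq hr,
      intervalIntegral.integral_const_mul]
  rw [flux, integral_Ioi_radialFlux (contDiff_pd hg (by norm_num) j) (hasCompactSupport_pd hc j)]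
  field_simp

end Representation

/-! ### The cut-off potential representation of a gradient -/

section Localization

variable {χ w z : E2 → ℝ}

theorem pd_eventuallyEq_zero {x : E2} (hx : x ∉ tsupport (fderiv ℝ χ)) (k : Fin 2) :
    pd k χ =ᶠ[𝓝 x] 0 := by
  filter_upwards [notMem_tsupport_iff_eventuallyEq.1 hx] with y hy
  simp [pd, hy]

theorem contDiff_mul_pd (hχ : ContDiff ℝ 2 χ)
    (hw : ∀ x ∈ tsupport (fderiv ℝ χ), ContDiffAt ℝ 1 w x) (k : Fin 2) :
    ContDiff ℝ 1 fun x => w x * pd k χ x := by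
  refine contDiff_iff_contDiffAt.2 fun x => ?_
  by_cases hx : x ∈ tsupport (fderiv ℝ χ)
  · exact (hw x hx).mul (contDiff_pd hχ (by norm_num) k).contDiffAt
  · refine (contDiffAt_const (c := 0)).congr_of_eventuallyEq ?_
    filter_upwards [pd_eventuallyEq_zero hx k] with y hy
    simp [hy]

theorem pd_mul_pd (hχ : ContDiff ℝ 2 χ)
    (hw : ∀ x ∈ tsupport (fderiv ℝ χ), ContDiffAt ℝ 1 w x) (k : Fin 2) (x : E2) :
    pd k (fun x => w x * pd k χ x) x = w x * pd k (pd k χ) x + pd k χ x * pd k w x := by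
  by_cases hx : x ∈ tsupport (fderiv ℝ χ)
  · exact pd_mul ((hw x hx).differentiableAt one_ne_zero)
      (differentiableAt_pd hχ.contDiffAt k) k
  · have zero := pd_eventuallyEq_zero hx k
    have product_zero : (fun x => w x * pd k χ x) =ᶠ[𝓝 x] 0 := by
      filter_upwards [zero] with y hy
      simp [hy]
    rw [(pd_congr_of_eventuallyEq product_zero k).eq_of_nhds,
      (pd_congr_of_eventuallyEq zero k).eq_of_nhds, zero.eq_of_nhds]
    simp [pd]

theorem integral_mul_pd_eq_neg_integral_pd_mul {f : E2 → ℝ} (hf : ContDiff ℝ 1 f)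
    (hc : HasCompactSupport f) (hz : ContDiff ℝ 1 z) (k : Fin 2) :
    ∫ x, f x * pd k z x = -∫ x, pd k f x * z x :=
  integral_mul_fderiv_eq_neg_fderiv_mul_of_integrable
    (((continuous_pd hf k).mul hz.continuous).integrable_of_hasCompactSupport
      (hasCompactSupport_pd hc k).mul_right)
    ((hf.continuous.mul (continuous_pd hz k)).integrable_of_hasCompactSupport hc.mul_right)
    ((hf.continuous.mul hz.continuous).integrable_of_hasCompactSupport hc.mul_right)
    (fun x _ => hf.differentiable one_ne_zero x) (fun x _ => hz.differentiable one_ne_zero x)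

theorem lapl_mul (hχ : ContDiff ℝ 2 χ) (hz : ContDiff ℝ 2 z) (x : E2) :
    lapl (fun y => χ y * z y) x =
      χ x * lapl z x + ∑ k, (z x * pd k (pd k χ) x + 2 * (pd k χ x * pd k z x)) := by
  have pd_pd_mul (k : Fin 2) : pd k (pd k fun y => χ y * z y) x =
      χ x * pd k (pd k z) x + (z x * pd k (pd k χ) x + 2 * (pd k χ x * pd k z x)) := by
    have diff_χ := hχ.differentiable two_ne_zero
    have diff_z := hz.differentiable two_ne_zero
    have diff_pd_χ := differentiableAt_pd hχ.contDiffAt (x := x) k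
    have diff_pd_z := differentiableAt_pd hz.contDiffAt (x := x) k
    rw [funext fun y => pd_mul (diff_χ y) (diff_z y) k,
      pd_add ((diff_χ x).fun_mul diff_pd_z) ((diff_z x).fun_mul diff_pd_χ),
      pd_mul (diff_χ x) diff_pd_z, pd_mul (diff_z x) diff_pd_χ]
    ring
  simp only [lapl, pd_pd_mul, Fin.sum_univ_two]
  ring

theorem continuous_pd_mul_pd (hχ : ContDiff ℝ 2 χ)
    (hw : ∀ x ∈ tsupport (fderiv ℝ χ), ContDiffAt ℝ 2 w x) (k : Fin 2) :
    Continuous fun x => pd k χ x * pd k w x := by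
  refine continuous_iff_continuousAt.2 fun x => ?_
  by_cases hx : x ∈ tsupport (fderiv ℝ χ)
  · exact (differentiableAt_pd hχ.contDiffAt k).continuousAt.mul
      (differentiableAt_pd (hw x hx) k).continuousAt
  · refine continuousAt_const.congr (f := fun _ => (0 : ℝ)) ?_
    filter_upwards [pd_eventuallyEq_zero hx k] with y hy
    simp [hy]

theorem integral_mul_commutator (hχ : ContDiff ℝ 2 χ) (hc : HasCompactSupport χ)
    (hw : ∀ x ∈ tsupport (fderiv ℝ χ), ContDiffAt ℝ 2 w x) (hz : ContDiff ℝ 2 z) (k : Fin 2) :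
    Integrable (fun x => w x * (z x * pd k (pd k χ) x + 2 * (pd k χ x * pd k z x))) ∧
      ∫ x, w x * (z x * pd k (pd k χ) x + 2 * (pd k χ x * pd k z x)) =
        -∫ x, (w x * pd k (pd k χ) x + 2 * (pd k χ x * pd k w x)) * z x := by
  have hw_one : ∀ x ∈ tsupport (fderiv ℝ χ), ContDiffAt ℝ 1 w x :=
    fun x hx => (hw x hx).of_le one_le_two
  set f : E2 → ℝ := fun x => w x * pd k χ x
  have hf : ContDiff ℝ 1 f := contDiff_mul_pd hχ hw_one k
  have hcf : HasCompactSupport f := (hasCompactSupport_pd hc k).mul_left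
  have hz_one : ContDiff ℝ 1 z := hz.of_le one_le_two
  have pd_f (x : E2) : pd k f x = w x * pd k (pd k χ) x + pd k χ x * pd k w x :=
    pd_mul_pd hχ hw_one k x
  have int_pd_f : Integrable fun x => pd k f x * z x :=
    ((continuous_pd hf k).mul hz.continuous).integrable_of_hasCompactSupport
      (hasCompactSupport_pd hcf k).mul_right
  have int_f : Integrable fun x => f x * pd k z x :=
    (hf.continuous.mul (continuous_pd hz_one k)).integrable_of_hasCompactSupport hcf.mul_right
  have int_pd_mul : Integrable fun x => pd k χ x * pd k w x * z x :=
    ((continuous_pd_mul_pd hχ hw k).mul hz.continuous).integrable_of_hasCompactSupport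
      (hasCompactSupport_pd hc k).mul_right.mul_right
  have split : (fun x => w x * (z x * pd k (pd k χ) x + 2 * (pd k χ x * pd k z x))) =
      fun x => (pd k f x * z x - pd k χ x * pd k w x * z x) + 2 * (f x * pd k z x) := by
    ext x
    rw [pd_f]
    ring
  have int_sub : Integrable fun x => pd k f x * z x - pd k χ x * pd k w x * z x :=
    int_pd_f.sub int_pd_mul
  refine ⟨split ▸ int_sub.fun_add (int_f.const_mul 2), ?_⟩
  rw [split, integral_add int_sub (int_f.const_mul 2), integral_sub int_pd_f int_pd_mul,
    integral_const_mul, integral_mul_pd_eq_neg_integral_pd_mul hf hcf hz_one]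
  have combine : (fun x => (w x * pd k (pd k χ) x + 2 * (pd k χ x * pd k w x)) * z x) =
      fun x => pd k f x * z x + pd k χ x * pd k w x * z x := by
    ext x
    rw [pd_f]
    ring
  rw [combine, integral_add int_pd_f int_pd_mul]
  ring

end Localization

theorem tsupport_fderiv_contDiffBump_subset (χ : ContDiffBump (0 : E2)) :
    tsupport (fderiv ℝ χ) ⊆ {x | ‖x‖ ∈ Set.Icc χ.rIn χ.rOut} := by
  refine closure_minimal (fun x hx => ?_) (isClosed_Icc.preimage continuous_norm)
  refine ⟨le_of_not_gt fun hlt => hx ?_, le_of_not_gt fun hlt => hx ?_⟩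
  · rw [(χ.eventuallyEq_one_of_mem_ball (mem_ball_zero_iff.2 hlt)).fderiv_eq]
    exact fderiv_const_apply _
  · have zero : χ =ᶠ[𝓝 x] fun _ => 0 := by
      filter_upwards [(isOpen_lt continuous_const continuous_norm).mem_nhds hlt] with y hy
      exact χ.zero_of_le_dist (by simpa using le_of_lt hy)
    rw [zero.fderiv_eq]
    exact fderiv_const_apply _

theorem isCompact_norm_mem_Icc (a b : ℝ) : IsCompact {x : E2 | ‖x‖ ∈ Set.Icc a b} :=
  (isCompact_closedBall (0 : E2) b).of_isClosed_subset (isClosed_Icc.preimage continuous_norm)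
    fun x hx => by simpa using hx.2

theorem pd_comp_sub_right (f : E2 → ℝ) (a x : E2) (j : Fin 2) :
    pd j (fun y => f (y - a)) x = pd j f (x - a) := by
  rw [pd, fderiv_comp_sub, pd]

theorem exists_abs_gradKernel_commutator_le (χ : ContDiffBump (0 : E2)) {ρ : ℝ} (hρ : ρ < χ.rIn)
    (j k : Fin 2) :
    ∃ C, ∀ x, ‖x‖ ≤ ρ → ∀ ξ, ‖ξ‖ ∈ Set.Icc χ.rIn χ.rOut →
      |gradKernel j (ξ - x) * pd k (pd k χ) ξ +
        2 * (pd k χ ξ * pd k (fun η => gradKernel j (η - x)) ξ)| ≤ C := by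
  have hχ : ContDiff ℝ 2 χ := χ.contDiff
  have cont : ContinuousOn (fun p : E2 × E2 => gradKernel j (p.1 - p.2) * pd k (pd k χ) p.1 +
      2 * (pd k χ p.1 * pd k (gradKernel j) (p.1 - p.2)))
      ({ξ | ‖ξ‖ ∈ Set.Icc χ.rIn χ.rOut} ×ˢ closedBall 0 ρ) := by
    rintro ⟨ξ, x⟩ ⟨hξ, hx⟩
    have ne : ξ - x ≠ 0 := by
      rw [sub_ne_zero]
      rintro rfl
      exact (hρ.trans_le hξ.1).not_ge (mem_closedBall_zero_iff.1 hx)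
    have kernel := contDiffAt_gradKernel (n := 2) j ne
    have sub : ContinuousAt (fun p : E2 × E2 => p.1 - p.2) (ξ, x) := by fun_prop
    have kernel_comp : ContinuousAt (fun p : E2 × E2 => gradKernel j (p.1 - p.2)) (ξ, x) :=
      ContinuousAt.comp' (f := fun p : E2 × E2 => p.1 - p.2) kernel.continuousAt sub
    have pd_kernel_comp :
        ContinuousAt (fun p : E2 × E2 => pd k (gradKernel j) (p.1 - p.2)) (ξ, x) :=
      ContinuousAt.comp' (f := fun p : E2 × E2 => p.1 - p.2)
        (differentiableAt_pd kernel k).continuousAt sub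
    have pd_χ := (continuous_pd (hχ.of_le one_le_two) k).comp (continuous_fst (X := E2) (Y := E2))
    have pd_pd_χ := (continuous_pd_pd hχ k k).comp (continuous_fst (X := E2) (Y := E2))
    exact ((kernel_comp.mul pd_pd_χ.continuousAt).add
      (continuousAt_const.mul (pd_χ.continuousAt.mul pd_kernel_comp))).continuousWithinAt
  obtain ⟨C, hC⟩ := ((isCompact_norm_mem_Icc χ.rIn χ.rOut).prod
    (isCompact_closedBall (0 : E2) ρ)).exists_bound_of_continuousOn cont
  refine ⟨C, fun x hx ξ hξ => ?_⟩
  rw [pd_comp_sub_right]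
  exact hC (ξ, x) ⟨hξ, mem_closedBall_zero_iff.2 hx⟩

theorem exists_abs_integral_gradKernel_mul_commutator_le (χ : ContDiffBump (0 : E2)) {ρ : ℝ}
    (hρ : ρ < χ.rIn) (j k : Fin 2) :
    ∃ C, ∀ z, ContDiff ℝ 2 z → ∀ x, ‖x‖ ≤ ρ →
      Integrable (fun ξ => gradKernel j (ξ - x) *
        (z ξ * pd k (pd k χ) ξ + 2 * (pd k χ ξ * pd k z ξ))) ∧
      |∫ ξ, gradKernel j (ξ - x) * (z ξ * pd k (pd k χ) ξ + 2 * (pd k χ ξ * pd k z ξ))| ≤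
        C * ∫ ξ in {ξ | ‖ξ‖ ∈ Set.Icc χ.rIn χ.rOut}, |z ξ| := by
  obtain ⟨C, hC⟩ := exists_abs_gradKernel_commutator_le χ hρ j k
  refine ⟨C, fun z hz x hx => ?_⟩
  have hχ : ContDiff ℝ 2 χ := χ.contDiff
  have support := tsupport_fderiv_contDiffBump_subset χ
  have smooth : ∀ ξ ∈ tsupport (fderiv ℝ χ), ContDiffAt ℝ 2 (fun η => gradKernel j (η - x)) ξ := by
    intro ξ hξ
    have ne : ξ - x ≠ 0 := by
      rw [sub_ne_zero]
      rintro rfl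
      exact (hρ.trans_le (support hξ).1).not_ge hx
    exact (contDiffAt_gradKernel j ne).comp ξ (contDiffAt_id.sub contDiffAt_const)
  obtain ⟨integrable, eq⟩ := integral_mul_commutator hχ χ.hasCompactSupport smooth hz k
  refine ⟨integrable, ?_⟩
  have annulus := isCompact_norm_mem_Icc χ.rIn χ.rOut
  rw [eq, abs_neg, ← integral_const_mul, ← setIntegral_eq_integral_of_forall_compl_eq_zero
    (s := {ξ | ‖ξ‖ ∈ Set.Icc χ.rIn χ.rOut}), ← Real.norm_eq_abs]
  · refine norm_integral_le_of_norm_le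
      ((hz.continuous.abs.continuousOn.integrableOn_compact annulus).const_mul C) ?_
    filter_upwards [ae_restrict_mem annulus.measurableSet] with ξ hξ
    rw [norm_mul, Real.norm_eq_abs, Real.norm_eq_abs]
    exact mul_le_mul_of_nonneg_right (hC x hx ξ hξ) (abs_nonneg _)
  · intro ξ hξ
    have zero := pd_eventuallyEq_zero (fun h => hξ (support h)) k
    rw [(pd_congr_of_eventuallyEq zero k).eq_of_nhds, zero.eq_of_nhds]
    simp [pd]

theorem integrable_gradKernel_sub_mul_of_hasCompactSupport {f : E2 → ℝ} (hf : Continuous f)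
    (hc : HasCompactSupport f) (x : E2) (j : Fin 2) :
    Integrable fun y => gradKernel j (x - y) * f y := by
  obtain ⟨M, hM⟩ := (isCompact_closedBall x 1).exists_bound_of_continuousOn hf.continuousOn
  exact integrable_gradKernel_sub_mul (hf.integrable_of_hasCompactSupport hc) one_pos
    (fun y hy => hM y (ball_subset_closedBall hy)) j

theorem pd_add_integral_gradKernel_eq (χ : ContDiffBump (0 : E2)) {z : E2 → ℝ}
    (hz : ContDiff ℝ 2 z) {x : E2} (hx : ‖x‖ < χ.rIn) (j : Fin 2)
    (hint : ∀ k, Integrable fun ξ =>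
      gradKernel j (ξ - x) * (z ξ * pd k (pd k χ) ξ + 2 * (pd k χ ξ * pd k z ξ))) :
    pd j z x + 1 / (2 * π) * ∫ ξ, gradKernel j (x - ξ) * (χ ξ * -lapl z ξ) =
      -(1 / (2 * π)) * ∑ k, ∫ ξ,
        gradKernel j (ξ - x) * (z ξ * pd k (pd k χ) ξ + 2 * (pd k χ ξ * pd k z ξ)) := by
  have hχ : ContDiff ℝ 2 χ := χ.contDiff
  have local_eq : pd j (fun ξ => χ ξ * z ξ) x = pd j z x := by
    refine (pd_congr_of_eventuallyEq ?_ j).eq_of_nhds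
    filter_upwards [χ.eventuallyEq_one_of_mem_ball (mem_ball_zero_iff.2 hx)] with y hy
    simp [hy]
  have repr := pd_eq_integral_gradKernel_mul_lapl (hχ.mul hz) χ.hasCompactSupport.mul_right x j
  have translate := integral_add_left_eq_self
    (fun ξ => gradKernel j (ξ - x) * lapl (fun ξ => χ ξ * z ξ) ξ) (μ := volume) x
  simp only [add_sub_cancel_left] at translate
  have integrable : Integrable fun ξ => gradKernel j (x - ξ) * (χ ξ * -lapl z ξ) :=
    integrable_gradKernel_sub_mul_of_hasCompactSupport
      (hχ.continuous.mul (continuous_lapl hz).neg) χ.hasCompactSupport.mul_right x j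
  have split : (fun ξ => gradKernel j (ξ - x) * lapl (fun ξ => χ ξ * z ξ) ξ) = fun ξ =>
      gradKernel j (x - ξ) * (χ ξ * -lapl z ξ) +
        (gradKernel j (ξ - x) * (z ξ * pd 0 (pd 0 χ) ξ + 2 * (pd 0 χ ξ * pd 0 z ξ)) +
          gradKernel j (ξ - x) * (z ξ * pd 1 (pd 1 χ) ξ + 2 * (pd 1 χ ξ * pd 1 z ξ))) := by
    ext ξ
    rw [lapl_mul hχ hz, ← neg_sub ξ x, gradKernel_neg, Fin.sum_univ_two]
    ring
  rw [local_eq, translate, split, integral_add integrable ((hint 0).fun_add (hint 1)),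
    integral_add (hint 0) (hint 1)] at repr
  rw [repr, Fin.sum_univ_two]
  ring

theorem exists_abs_pd_add_integral_gradKernel_le (χ : ContDiffBump (0 : E2)) {ρ : ℝ}
    (hρ : ρ < χ.rIn) :
    ∃ C > 0, ∀ z, ContDiff ℝ 2 z → ∀ x, ‖x‖ ≤ ρ → ∀ j,
      |pd j z x + 1 / (2 * π) * ∫ ξ, gradKernel j (x - ξ) * (χ ξ * -lapl z ξ)| ≤
        C * ∫ ξ in {ξ | ‖ξ‖ ∈ Set.Icc χ.rIn χ.rOut}, |z ξ| := by
  choose C hC using fun j k => exists_abs_integral_gradKernel_mul_commutator_le χ hρ j k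
  refine ⟨1 + ∑ j, |∑ k, C j k|, by positivity, fun z hz x hx j => ?_⟩
  have mass_nonneg : 0 ≤ ∫ ξ in {ξ | ‖ξ‖ ∈ Set.Icc χ.rIn χ.rOut}, |z ξ| :=
    integral_nonneg fun _ => abs_nonneg _
  have const_le : ∑ k, C j k ≤ 1 + ∑ j, |∑ k, C j k| := by
    have := Finset.single_le_sum (f := fun j => |∑ k, C j k|) (fun _ _ => abs_nonneg _)
      (Finset.mem_univ j)
    linarith [le_abs_self (∑ k, C j k)]
  have const_le_one : 1 / (2 * π) ≤ 1 := by
    rw [div_le_one (by positivity)]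
    linarith [Real.two_le_pi]
  rw [pd_add_integral_gradKernel_eq χ hz (hx.trans_lt hρ) j fun k => (hC j k z hz x hx).1,
    abs_mul, abs_neg, abs_of_pos (by positivity)]
  calc _ ≤ 1 * |∑ k, _| := mul_le_mul_of_nonneg_right const_le_one (abs_nonneg _)
    _ ≤ (∑ k, C j k) * ∫ ξ in {ξ | ‖ξ‖ ∈ Set.Icc χ.rIn χ.rOut}, |z ξ| := by
      rw [one_mul, Finset.sum_mul]
      exact (Finset.abs_sum_le_sum_abs _ _).trans
        (Finset.sum_le_sum fun k _ => (hC j k z hz x hx).2)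
    _ ≤ _ := mul_le_mul_of_nonneg_right const_le mass_nonneg

/-- The fixed cut-off profile: it is `1` on the ball of radius `5/16` and `0` off the ball of
radius `7/16`. -/
noncomputable def cutoff : ContDiffBump (0 : E2) := ⟨5 / 16, 7 / 16, by norm_num, by norm_num⟩

/-- The density `-Δz`, cut off at scale `R`: it agrees with `-Δz` on the ball of radius `5R/16`,
and its Newtonian potential reproduces `z` there up to a controlled error. -/
noncomputable def cutoffDensity (R : ℝ) (z : E2 → ℝ) (x : E2) : ℝ :=
  cutoff (R⁻¹ • x) * -lapl z x

theorem integral_gradKernel_mul_cutoff_comp_smul (z : E2 → ℝ) {R : ℝ} (hR : 0 < R) (x : E2)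
    (j : Fin 2) :
    ∫ ξ, gradKernel j (R⁻¹ • x - ξ) * (cutoff ξ * -(R ^ 2 * lapl z (R • ξ))) =
      R * ∫ ξ, gradKernel j (x - ξ) * cutoffDensity R z ξ := by
  have scale := Measure.integral_comp_smul_of_nonneg volume
    (fun ξ : E2 => gradKernel j (x - ξ) * cutoffDensity R z ξ) R (hR := hR.le)
  have integrand (ξ : E2) : gradKernel j (R⁻¹ • x - ξ) * (cutoff ξ * -(R ^ 2 * lapl z (R • ξ))) =
      R ^ 3 * (gradKernel j (x - R • ξ) * cutoffDensity R z (R • ξ)) := by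
    have smul_sub_eq : R⁻¹ • x - ξ = R⁻¹ • (x - R • ξ) := by
      rw [smul_sub, inv_smul_smul₀ hR.ne']
    rw [smul_sub_eq, gradKernel_smul, cutoffDensity, inv_smul_smul₀ hR.ne', inv_inv]
    ring
  simp only [finrank_euclideanSpace_fin, smul_eq_mul] at scale
  rw [funext integrand, integral_const_mul, scale]
  field_simp

theorem exists_abs_pd_add_integral_cutoffDensity_le :
    ∃ C > 0, ∀ z, ContDiff ℝ 2 z → ∀ R > 0, ∀ x, ‖x‖ ≤ R / 4 → ∀ j,
      |pd j z x + 1 / (2 * π) * ∫ ξ, gradKernel j (x - ξ) * cutoffDensity R z ξ| ≤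
        C / R * ∫ ξ in {ξ : E2 | ‖ξ‖ ∈ Set.Icc (5 / 16 : ℝ) (7 / 16)}, |z (R • ξ)| := by
  obtain ⟨C, hC, bound⟩ := exists_abs_pd_add_integral_gradKernel_le cutoff (ρ := 1 / 4)
    (by norm_num [cutoff])
  refine ⟨C, hC, fun z hz R hR x hx j => ?_⟩
  have hz_scaled : ContDiff ℝ 2 fun y : E2 => z (0 + R • y) := hz.comp (by fun_prop)
  have hx_scaled : ‖R⁻¹ • x‖ ≤ 1 / 4 := by
    rw [norm_smul, Real.norm_of_nonneg (by positivity), inv_mul_le_iff₀ hR]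
    linarith
  have scaled_bound := bound _ hz_scaled (R⁻¹ • x) hx_scaled j
  simp only [pd_comp_add_smul, lapl_comp_add_smul] at scaled_bound
  simp only [zero_add, smul_inv_smul₀ hR.ne',
    integral_gradKernel_mul_cutoff_comp_smul z hR] at scaled_bound
  rw [mul_left_comm, ← mul_add, abs_mul, abs_of_pos hR] at scaled_bound
  rw [div_mul_eq_mul_div C, le_div_iff₀ hR, mul_comm _ R]
  exact scaled_bound

/-! ### Far-field asymptotics of potentials -/

theorem inv_norm_sub_le_of_notMem_ball {x y : E2} (hx : 0 < ‖x‖) (hy : y ∉ ball x (‖x‖ / 2)) :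
    ‖x - y‖⁻¹ ≤ 2 / ‖x‖ := by
  rw [mem_ball, dist_comm, dist_eq_norm, not_lt] at hy
  rw [inv_le_comm₀ (by linarith) (by positivity), inv_div]
  exact hy

theorem abs_gradKernel_sub_sub_le {x : E2} {k : ℝ} (hk : 0 ≤ k) (hx : 0 < ‖x‖)
    (hkx : 2 * k ≤ ‖x‖) (j : Fin 2) (y : E2) :
    |gradKernel j (x - y) - gradKernel j x| ≤
      2 * k / ‖x‖ ^ 2 + ({y : E2 | k ≤ ‖y‖}.indicator (fun _ => 3 / ‖x‖) y +
        (ball x (‖x‖ / 2)).indicator (fun y => ‖x - y‖⁻¹) y) := by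
  have near_nonneg : 0 ≤ (ball x (‖x‖ / 2)).indicator (fun y => ‖x - y‖⁻¹) y :=
    Set.indicator_nonneg (fun _ _ => by positivity) y
  by_cases hy : k ≤ ‖y‖
  · have crude : |gradKernel j (x - y) - gradKernel j x| ≤ ‖x - y‖⁻¹ + ‖x‖⁻¹ :=
      (abs_sub _ _).trans (add_le_add (abs_gradKernel_le _ _) (abs_gradKernel_le _ _))
    have first_nonneg : 0 ≤ 2 * k / ‖x‖ ^ 2 := by positivity
    have three : 3 / ‖x‖ = 2 / ‖x‖ + ‖x‖⁻¹ := by ring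
    have two_nonneg : 0 ≤ 2 / ‖x‖ := by positivity
    rw [Set.indicator_of_mem (s := {y : E2 | k ≤ ‖y‖}) hy]
    by_cases hyx : y ∈ ball x (‖x‖ / 2)
    · rw [Set.indicator_of_mem hyx]
      linarith
    · linarith [inv_norm_sub_le_of_notMem_ball hx hyx]
  · rw [not_le] at hy
    have far : ‖x‖ / 2 ≤ ‖x - y‖ := by linarith [norm_sub_norm_le x y]
    have sharp := abs_gradKernel_sub_le j (y := x - y) (z := x)
      (norm_pos_iff.1 (by linarith)) (norm_pos_iff.1 hx)
    rw [sub_sub_cancel_left, norm_neg] at sharp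
    rw [Set.indicator_of_notMem (s := {y : E2 | k ≤ ‖y‖}) hy.not_ge]
    have quotient_le : ‖y‖ / (‖x - y‖ * ‖x‖) ≤ k / (‖x‖ / 2 * ‖x‖) := by gcongr
    have rearrange : k / (‖x‖ / 2 * ‖x‖) = 2 * k / ‖x‖ ^ 2 := by field_simp
    linarith

theorem abs_integral_gradKernel_sub_mul_sub_le {f : E2 → ℝ} (hf : Integrable f) (h0 : ∀ y, 0 ≤ f y)
    {x : E2} {k D : ℝ} (hk : 0 ≤ k) (hx : 0 < ‖x‖) (hkx : 2 * k ≤ ‖x‖)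
    (hD : ∀ y ∈ ball x (‖x‖ / 2), f y ≤ D / ‖x‖ ^ 2) (j : Fin 2) :
    |(∫ y, gradKernel j (x - y) * f y) - (∫ y, f y) * gradKernel j x| ≤
      (2 * k * (∫ y, f y) / ‖x‖ + 3 * (∫ y in {y : E2 | k ≤ ‖y‖}, f y) + π * D) / ‖x‖ := by
  have hm : MeasurableSet {y : E2 | k ≤ ‖y‖} := measurableSet_le measurable_const measurable_norm
  have int_kernel := integrable_gradKernel_sub_mul hf (half_pos hx)
    (fun y hy => (abs_of_nonneg (h0 y)).trans_le (hD y hy)) j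
  have int_all : Integrable fun y => 2 * k / ‖x‖ ^ 2 * f y := hf.const_mul _
  have int_tail : Integrable fun y => 3 / ‖x‖ * {y : E2 | k ≤ ‖y‖}.indicator f y :=
    (hf.indicator hm).const_mul _
  have int_near : Integrable fun y =>
      D / ‖x‖ ^ 2 * (ball x (‖x‖ / 2)).indicator (fun y => ‖x - y‖⁻¹) y :=
    ((integrable_indicator_iff measurableSet_ball).2
      (integrableOn_inv_norm_sub_ball x (‖x‖ / 2))).const_mul _
  have bound : ‖∫ y, (gradKernel j (x - y) * f y - f y * gradKernel j x)‖ ≤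
      ∫ y, (2 * k / ‖x‖ ^ 2 * f y + 3 / ‖x‖ * {y : E2 | k ≤ ‖y‖}.indicator f y +
        D / ‖x‖ ^ 2 * (ball x (‖x‖ / 2)).indicator (fun y => ‖x - y‖⁻¹) y) := by
    refine norm_integral_le_of_norm_le ((int_all.fun_add int_tail).fun_add int_near)
      (.of_forall fun y => ?_)
    rw [mul_comm (f y), ← sub_mul, norm_mul, Real.norm_eq_abs, Real.norm_of_nonneg (h0 y)]
    refine (mul_le_mul_of_nonneg_right (abs_gradKernel_sub_sub_le hk hx hkx j y)
      (h0 y)).trans ?_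
    rw [add_mul, add_mul, ← add_assoc]
    gcongr ?_ + ?_ + ?_
    · exact le_rfl
    · by_cases hy : k ≤ ‖y‖ <;> simp [hy]
    · by_cases hy : y ∈ ball x (‖x‖ / 2)
      · simp only [Set.indicator_of_mem hy]
        rw [mul_comm]
        exact mul_le_mul_of_nonneg_right (hD y hy) (by positivity)
      · simp [Set.indicator_of_notMem hy]
  rw [integral_sub int_kernel (hf.mul_const _), integral_mul_const, Real.norm_eq_abs,
    integral_add (int_all.fun_add int_tail) int_near, integral_add int_all int_tail,
    integral_const_mul, integral_const_mul, integral_const_mul, integral_indicator hm,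
    integral_indicator measurableSet_ball,
    setIntegral_inv_norm_sub_ball x (half_pos hx).le] at bound
  exact bound.trans_eq (by field_simp)

theorem setIntegral_add_setIntegral_le {f : E2 → ℝ} {s t S : Set E2} (hf : IntegrableOn f S)
    (h0 : ∀ y ∈ S, 0 ≤ f y) (hS : MeasurableSet S) (ht : MeasurableSet t) (hst : Disjoint s t)
    (hsS : s ⊆ S) (htS : t ⊆ S) :
    (∫ y in s, f y) + ∫ y in t, f y ≤ ∫ y in S, f y := by
  rw [← setIntegral_union hst ht (hf.mono_set hsS) (hf.mono_set htS)]
  exact setIntegral_mono_set hf ((ae_restrict_iff' hS).2 (.of_forall h0))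
    (Set.union_subset hsS htS).eventuallyLE

theorem abs_integral_gradKernel_sub_mul_sub_mass_le {f : E2 → ℝ} (hf : Integrable f)
    (h0 : ∀ y, 0 ≤ f y) {x : E2} {M k η D : ℝ} (hk : 0 < k) (hx : 4 * k ≤ ‖x‖)
    (hin : M - 2 * η ≤ ∫ y in closedBall (0 : E2) k, f y) (htot : ∫ y, f y ≤ M + η)
    (hD : ∀ y ∈ ball x (‖x‖ / 2), f y ≤ D / ‖x‖ ^ 2) (j : Fin 2) :
    |(∫ y, gradKernel j (x - y) * f y) - M * gradKernel j x| ≤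
      (4 * k * (M + η) / ‖x‖ + 11 * η + π * D) / ‖x‖ := by
  have hx_pos : 0 < ‖x‖ := by linarith
  have hm : MeasurableSet {y : E2 | 2 * k ≤ ‖y‖} :=
    measurableSet_le measurable_const measurable_norm
  have disjoint : Disjoint (closedBall (0 : E2) k) {y | 2 * k ≤ ‖y‖} := by
    refine Set.disjoint_left.2 fun y hy (hy' : 2 * k ≤ ‖y‖) => ?_
    linarith [mem_closedBall_zero_iff.1 hy]
  have tail := setIntegral_add_setIntegral_le (S := Set.univ) hf.integrableOn (fun y _ => h0 y)
    .univ hm disjoint (Set.subset_univ _) (Set.subset_univ _)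
  have inner_le := setIntegral_le_integral (s := closedBall (0 : E2) k) hf (.of_forall h0)
  rw [setIntegral_univ] at tail
  have asymptotics := abs_integral_gradKernel_sub_mul_sub_le hf h0 (k := 2 * k) (by linarith)
    hx_pos (by linarith) hD j
  have mass_defect : |((∫ y, f y) - M) * gradKernel j x| ≤ 2 * η * ‖x‖⁻¹ := by
    rw [abs_mul]
    refine mul_le_mul ?_ (abs_gradKernel_le j x) (abs_nonneg _) (by linarith)
    rw [abs_le]
    constructor <;> linarith
  have split : (∫ y, gradKernel j (x - y) * f y) - M * gradKernel j x =
      ((∫ y, gradKernel j (x - y) * f y) - (∫ y, f y) * gradKernel j x) +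
        ((∫ y, f y) - M) * gradKernel j x := by ring
  have first_le : 2 * (2 * k) * (∫ y, f y) / ‖x‖ ≤ 4 * k * (M + η) / ‖x‖ := by
    gcongr ?_ / _
    nlinarith
  calc _ ≤ (2 * (2 * k) * (∫ y, f y) / ‖x‖ + 3 * (∫ y in {y : E2 | 2 * k ≤ ‖y‖}, f y) + π * D)
        / ‖x‖ + 2 * η * ‖x‖⁻¹ := split ▸ (abs_add_le _ _).trans (add_le_add asymptotics mass_defect)
    _ = (2 * (2 * k) * (∫ y, f y) / ‖x‖ + 3 * (∫ y in {y : E2 | 2 * k ≤ ‖y‖}, f y) + π * D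
        + 2 * η) / ‖x‖ := by ring
    _ ≤ _ := div_le_div_of_nonneg_right (by linarith) hx_pos.le

/-! ### ε-regularity -/

theorem exists_doubling_point {X : Type*} [PseudoMetricSpace X] [ProperSpace X] {g : X → ℝ}
    {x : X} {ρ : ℝ} (hg : ContinuousOn g (closedBall x ρ)) (hρ : 0 < ρ) (hgx : 0 < g x) :
    ∃ y, ∃ σ > 0, ball y σ ⊆ ball x ρ ∧ (∀ w ∈ ball y σ, g w ≤ 4 * g y) ∧
      ρ ^ 2 * g x ≤ 4 * σ ^ 2 * g y := by
  have cont : ContinuousOn (fun y => (ρ - dist y x) ^ 2 * g y) (closedBall x ρ) := by fun_prop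
  obtain ⟨y, hy, max⟩ := (isCompact_closedBall x ρ).exists_isMaxOn
    ⟨x, mem_closedBall_self hρ.le⟩ cont
  have max_x : ρ ^ 2 * g x ≤ (ρ - dist y x) ^ 2 * g y := by
    simpa using max (mem_closedBall_self hρ.le)
  have dist_lt : dist y x < ρ := by
    refine lt_of_le_of_ne hy fun h => ?_
    rw [h, sub_self] at max_x
    have : 0 < ρ ^ 2 * g x := by positivity
    linarith
  obtain ⟨σ, hσ⟩ : ∃ σ, ρ - dist y x = 2 * σ := ⟨(ρ - dist y x) / 2, by ring⟩
  have σ_pos : 0 < σ := by linarith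
  have subset : ball y σ ⊆ ball x ρ := ball_subset_ball' (by linarith)
  refine ⟨y, σ, σ_pos, subset, fun w hw => ?_, max_x.trans_eq (by rw [hσ]; ring)⟩
  have σ_le : σ ≤ ρ - dist w x := by
    linarith [dist_triangle w y x, mem_ball.1 hw]
  have max_w : (ρ - dist w x) ^ 2 * g w ≤ (2 * σ) ^ 2 * g y := by
    rw [← hσ]
    exact max (ball_subset_closedBall (subset hw))
  by_contra! lt
  have gy_nonneg : 0 ≤ g y := by
    refine nonneg_of_mul_nonneg_right ((by positivity : 0 ≤ ρ ^ 2 * g x).trans max_x) ?_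
    exact pow_pos (by linarith) 2
  have : σ ^ 2 * g w ≤ (ρ - dist w x) ^ 2 * g w := by
    gcongr
    linarith
  nlinarith [pow_pos σ_pos 2]

theorem half_exp_mul_le_setIntegral_exp {z : E2 → ℝ} (hz : ContDiff ℝ 2 z) {x : E2} {c t : ℝ}
    (ht : 0 ≤ t) (hlapl : ∀ y ∈ ball x t, -c ≤ lapl z y) (hct : c * t ^ 2 ≤ 4) :
    Real.exp (z x) / 2 * (π * t ^ 2) ≤ ∫ y in ball x t, Real.exp (z y) := by
  have mean := le_setIntegral_ball_of_neg_le_lapl hz ht hlapl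
  have hz_cont := hz.continuous
  have int_ball {f : E2 → ℝ} (hf : Continuous f) : IntegrableOn f (ball x t) :=
    (hf.continuousOn.integrableOn_compact (isCompact_closedBall x t)).mono_set
      ball_subset_closedBall
  set m := z x - 1 / 2 with hm
  have tangent (y : E2) : Real.exp m * (1 - m + z y) ≤ Real.exp (z y) := by
    have := mul_le_mul_of_nonneg_left (Real.add_one_le_exp (z y - m)) (Real.exp_pos m).le
    rw [← Real.exp_add, add_sub_cancel] at this
    linarith
  have half_le : Real.exp (z x) / 2 ≤ Real.exp m := by
    have := mul_le_mul_of_nonneg_left (Real.add_one_le_exp (-(1 / 2) : ℝ)) (Real.exp_pos (z x)).le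
    rw [← Real.exp_add, ← sub_eq_add_neg, ← hm] at this
    linarith
  have volume_ball : volume.real (ball x t) = π * t ^ 2 := by
    simp [Measure.real, ht, Real.pi_nonneg, mul_comm]
  calc Real.exp (z x) / 2 * (π * t ^ 2) ≤ Real.exp m * (π * t ^ 2) := by gcongr
    _ ≤ Real.exp m * (π * t ^ 2 * (1 - m) + ∫ y in ball x t, z y) := by
      gcongr
      have := mul_le_mul_of_nonneg_left hct (by positivity : 0 ≤ π * t ^ 2)
      rw [hm]
      linarith
    _ = ∫ y in ball x t, Real.exp m * (1 - m + z y) := by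
      rw [integral_const_mul, integral_add (int_ball continuous_const) (int_ball hz_cont),
        setIntegral_const, volume_ball, smul_eq_mul]
    _ ≤ ∫ y in ball x t, Real.exp (z y) :=
      setIntegral_mono (int_ball (by fun_prop)) (int_ball (by fun_prop)) tangent

theorem mul_sq_le_setIntegral_neg_lapl {z : E2 → ℝ} (hz : ContDiff ℝ 2 z) {x : E2} {t a Λ : ℝ}
    (ht : 0 ≤ t) (ha : 0 ≤ a) (hΛ : 0 ≤ Λ)
    (hl : ∀ y ∈ ball x t, a * Real.exp (z y) ≤ -lapl z y ∧
      -lapl z y ≤ Λ * (a * Real.exp (z y)))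
    (hdouble : ∀ y ∈ ball x t, a * Real.exp (z y) ≤ 4 * (a * Real.exp (z x)))
    (hsmall : Λ * (a * Real.exp (z x)) * t ^ 2 ≤ 1) :
    π / 2 * (a * Real.exp (z x) * t ^ 2) ≤ ∫ y in ball x t, -lapl z y := by
  have hz_cont := hz.continuous
  have lower := half_exp_mul_le_setIntegral_exp hz ht (x := x)
    (c := 4 * (Λ * (a * Real.exp (z x)))) (fun y hy => by
      have := mul_le_mul_of_nonneg_left (hdouble y hy) hΛ
      linarith [(hl y hy).2]) (by linarith)
  have int_ball {f : E2 → ℝ} (hf : Continuous f) : IntegrableOn f (ball x t) :=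
    (hf.continuousOn.integrableOn_compact (isCompact_closedBall x t)).mono_set
      ball_subset_closedBall
  calc π / 2 * (a * Real.exp (z x) * t ^ 2) = a * (Real.exp (z x) / 2 * (π * t ^ 2)) := by ring
    _ ≤ a * ∫ y in ball x t, Real.exp (z y) := by gcongr
    _ = ∫ y in ball x t, a * Real.exp (z y) := (integral_const_mul _ _).symm
    _ ≤ ∫ y in ball x t, -lapl z y := setIntegral_mono_on (int_ball (by fun_prop))
        (int_ball (continuous_lapl hz).neg) measurableSet_ball fun y hy => (hl y hy).1

theorem mul_sq_le_of_forall_le {Λ L σ η : ℝ} (hΛ : 0 < Λ) (hL : 0 < L) (hσ : 0 ≤ σ)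
    (hη : η ≤ 1 / Λ)
    (h : ∀ t, 0 ≤ t → t ≤ σ → Λ * L * t ^ 2 ≤ 1 → π / 2 * (L * t ^ 2) ≤ η) :
    L * σ ^ 2 ≤ η := by
  have two_lt_pi : 2 < π := by linarith [Real.pi_gt_three]
  have small : Λ * L * σ ^ 2 ≤ 1 := by
    by_contra! large
    have rescale : √(1 / (Λ * L)) ^ 2 = 1 / (Λ * L) := Real.sq_sqrt (by positivity)
    have radius_le : √(1 / (Λ * L)) ≤ σ := by
      rw [Real.sqrt_le_left hσ, div_le_iff₀ (by positivity)]
      linarith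
    have too_much := h _ (Real.sqrt_nonneg _) radius_le (by rw [rescale]; field_simp; rfl)
    have cancel : L * (1 / (Λ * L)) = 1 / Λ := by field_simp
    rw [rescale, cancel] at too_much
    have : 0 < 1 / Λ := by positivity
    nlinarith
  have : 0 ≤ L * σ ^ 2 := by positivity
  nlinarith [h σ hσ le_rfl small]

theorem neg_lapl_le_of_setIntegral_le {z : E2 → ℝ} (hz : ContDiff ℝ 2 z) {x : E2} {ρ a Λ η : ℝ}
    (hρ : 0 < ρ) (ha : 0 < a) (hΛ : 0 < Λ)
    (hl : ∀ y ∈ ball x ρ, a * Real.exp (z y) ≤ -lapl z y ∧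
      -lapl z y ≤ Λ * (a * Real.exp (z y)))
    (hη : η ≤ 1 / Λ) (hm : ∫ y in ball x ρ, -lapl z y ≤ η) :
    -lapl z x ≤ 4 * Λ * η / ρ ^ 2 := by
  have hz_cont := hz.continuous
  obtain ⟨y, σ, σ_pos, subset, doubling, max_x⟩ := exists_doubling_point
    (g := fun y => a * Real.exp (z y)) (x := x) (by fun_prop) hρ (by positivity)
  set L := a * Real.exp (z y)
  have mass (t : ℝ) (ht : 0 ≤ t) (htσ : t ≤ σ) (hLt : Λ * L * t ^ 2 ≤ 1) :
      π / 2 * (L * t ^ 2) ≤ η := by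
    have sub_ball : ball y t ⊆ ball x ρ := (ball_subset_ball htσ).trans subset
    have int_lapl : IntegrableOn (fun w => -lapl z w) (ball x ρ) :=
      ((continuous_lapl hz).neg.continuousOn.integrableOn_compact
        (isCompact_closedBall x ρ)).mono_set ball_subset_closedBall
    have lapl_nonneg : ∀ w ∈ ball x ρ, 0 ≤ -lapl z w := fun w hw =>
      le_trans (by positivity) (hl w hw).1
    exact (mul_sq_le_setIntegral_neg_lapl hz ht ha.le hΛ.le (fun w hw => hl w (sub_ball hw))
      (fun w hw => doubling w (ball_subset_ball htσ hw)) hLt).trans <|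
      (setIntegral_mono_set int_lapl ((ae_restrict_iff' measurableSet_ball).2
        (.of_forall lapl_nonneg)) sub_ball.eventuallyLE).trans hm
  have mass_σ := mul_sq_le_of_forall_le hΛ (by positivity) σ_pos.le hη mass
  calc -lapl z x ≤ Λ * (a * Real.exp (z x)) := (hl x (mem_ball_self hρ)).2
    _ ≤ Λ * (4 * η / ρ ^ 2) := by
      gcongr
      rw [le_div_iff₀ (by positivity)]
      linarith
    _ = 4 * Λ * η / ρ ^ 2 := by ring

/-! ### The Pohozaev identity -/

section
variable {E F : Type*} [NormedAddCommGroup E] [NormedSpace ℝ E]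
  [NormedAddCommGroup F] [NormedSpace ℝ F]

theorem hasDerivAt_pow_smul_comp_smul (n : ℕ) {f : E → F} {x : E} {t : ℝ} (ht : t ≠ 0)
    (hf : DifferentiableAt ℝ f (t • x)) :
    HasDerivAt (fun s : ℝ => s ^ n • f (s • x))
      ((t ^ n * t⁻¹) • ((n : ℝ) • f (t • x) + fderiv ℝ f (t • x) (t • x))) t := by
  have inner : HasDerivAt (fun s : ℝ => f (s • x)) (fderiv ℝ f (t • x) x) t := by
    simpa [Function.comp_def] using
      hf.hasFDerivAt.comp_hasDerivAt t ((hasDerivAt_id t).smul_const x)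
  have power : t ^ n * t⁻¹ * n = n * t ^ (n - 1) := by
    rcases n with _ | n
    · simp
    · rw [Nat.add_sub_cancel, pow_succ]
      field_simp
  convert (hasDerivAt_pow n t).fun_smul inner using 1
  rw [smul_add, smul_smul, map_smul, smul_smul, power, inv_mul_cancel_right₀ ht, add_comm]

variable [FiniteDimensional ℝ E] [MeasurableSpace E] [BorelSpace E] (μ : Measure E)
  [μ.IsAddHaarMeasure]

theorem pow_finrank_smul_integral_comp_smul (g : E → F) {t : ℝ} (ht : 0 < t) :
    t ^ Module.finrank ℝ E • ∫ x, g (t • x) ∂μ = ∫ x, g x ∂μ := by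
  rw [Measure.integral_comp_smul_of_nonneg μ g t (hR := ht.le),
    smul_inv_smul₀ (pow_ne_zero _ ht.ne')]

variable {μ}

theorem integrable_uncurry_pow_smul_comp_smul {h : E → F} (hc : Continuous h)
    (hi : Integrable h μ) :
    Integrable (Function.uncurry fun (t : ℝ) x => (t ^ Module.finrank ℝ E * t⁻¹) • h (t • x))
      ((volume.restrict (Set.uIoc 1 2)).prod μ) := by
  have pos {t : ℝ} (ht : t ∈ Set.uIcc (1 : ℝ) 2) : 0 < t := by
    rw [Set.uIcc_of_le one_le_two] at ht
    linarith [ht.1]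
  have meas : AEStronglyMeasurable
      (Function.uncurry fun (t : ℝ) x => (t ^ Module.finrank ℝ E * t⁻¹) • h (t • x))
      ((volume.restrict (Set.uIoc 1 2)).prod μ) := by
    refine (by fun_prop : Measurable fun p : ℝ × E =>
      p.1 ^ Module.finrank ℝ E * p.1⁻¹).aestronglyMeasurable.smul ?_
    exact (hc.comp (by fun_prop : Continuous fun p : ℝ × E => p.1 • p.2)).aestronglyMeasurable
  refine (integrable_prod_iff meas).2 ⟨?_, ?_⟩
  · filter_upwards [ae_restrict_mem measurableSet_uIoc] with t ht
    exact (hi.comp_smul (pos (Set.uIoc_subset_uIcc ht)).ne').fun_smul (t ^ Module.finrank ℝ E * t⁻¹)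
  · have inner_eq : Set.EqOn
        (fun t : ℝ => ∫ x, ‖(t ^ Module.finrank ℝ E * t⁻¹) • h (t • x)‖ ∂μ)
        (fun t => t⁻¹ * ∫ x, ‖h x‖ ∂μ) (Set.uIoc 1 2) := by
      intro t ht
      have t_pos := pos (Set.uIoc_subset_uIcc ht)
      simp only [norm_smul, integral_const_mul]
      rw [Real.norm_of_nonneg (by positivity), mul_comm (t ^ _), mul_assoc, ← smul_eq_mul (t ^ _),
        pow_finrank_smul_integral_comp_smul μ (fun x => ‖h x‖) t_pos]
    refine IntegrableOn.congr_fun ?_ inner_eq.symm measurableSet_uIoc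
    exact (intervalIntegrable_iff.1 (intervalIntegral.intervalIntegrable_inv
      (fun t ht => (pos ht).ne') continuousOn_id)).mul_const _

/-- Obtained by integrating the derivative of `t ↦ t ^ n • f (t • x)`, whose integral over `x` does
not depend on `t`, over `1 ≤ t ≤ 2`. -/
theorem integral_fderiv_apply_self [CompleteSpace F] {f : E → F} (hf : ContDiff ℝ 1 f)
    (hfi : Integrable f μ) (hfd : Integrable (fun x => fderiv ℝ f x x) μ) :
    ∫ x, fderiv ℝ f x x ∂μ = -((Module.finrank ℝ E : ℝ) • ∫ x, f x ∂μ) := by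
  set n := Module.finrank ℝ E
  set h : E → F := fun x => (n : ℝ) • f x + fderiv ℝ f x x
  have h_integrable : Integrable h μ := (hfi.fun_smul (n : ℝ)).add hfd
  have h_cont : Continuous h := by
    have := hf.continuous
    have := hf.continuous_fderiv one_ne_zero
    fun_prop
  have pos {t : ℝ} (ht : t ∈ Set.uIcc (1 : ℝ) 2) : 0 < t := by
    rw [Set.uIcc_of_le one_le_two] at ht
    linarith [ht.1]
  have ftc (x : E) : ∫ t in (1 : ℝ)..2, (t ^ n * t⁻¹) • h (t • x) =
      (2 : ℝ) ^ n • f ((2 : ℝ) • x) - f x := by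
    have cont : ContinuousOn (fun t : ℝ => (t ^ n * t⁻¹) • h (t • x)) (Set.uIcc 1 2) :=
      ((continuousOn_id.pow n).mul (continuousOn_id.inv₀ fun t ht => (pos ht).ne')).smul
        (by fun_prop)
    rw [intervalIntegral.integral_eq_sub_of_hasDerivAt (fun t ht => hasDerivAt_pow_smul_comp_smul n
      (pos ht).ne' (hf.differentiable one_ne_zero _)) cont.intervalIntegrable]
    simp
  have fubini : ∫ t in (1 : ℝ)..2, (∫ x, (t ^ n * t⁻¹) • h (t • x) ∂μ) =
      ∫ x, (∫ t in (1 : ℝ)..2, (t ^ n * t⁻¹) • h (t • x)) ∂μ :=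
    intervalIntegral_integral_swap (integrable_uncurry_pow_smul_comp_smul h_cont h_integrable)
  have log_two : ∫ t in (1 : ℝ)..2, (∫ x, (t ^ n * t⁻¹) • h (t • x) ∂μ) =
      Real.log 2 • ∫ x, h x ∂μ := by
    rw [intervalIntegral.integral_congr (g := fun t => t⁻¹ • ∫ x, h x ∂μ) fun t ht => ?_,
      intervalIntegral.integral_smul_const, integral_inv_of_pos one_pos two_pos, div_one]
    simp only [integral_smul, mul_comm (t ^ n), mul_smul]
    rw [pow_finrank_smul_integral_comp_smul μ h (pos ht)]
  have difference : ∫ x, ((2 : ℝ) ^ n • f ((2 : ℝ) • x) - f x) ∂μ = 0 := by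
    rw [integral_sub ((hfi.comp_smul two_ne_zero).fun_smul _) hfi, integral_smul,
      pow_finrank_smul_integral_comp_smul μ f two_pos, sub_self]
  simp only [log_two, ftc, difference] at fubini
  have h_zero := (smul_eq_zero.1 fubini).resolve_left (Real.log_pos one_lt_two).ne'
  rw [integral_add (hfi.fun_smul (n : ℝ)) hfd, integral_smul] at h_zero
  exact eq_neg_of_add_eq_zero_right h_zero

end

variable {f : E2 → ℝ}

theorem integrable_inv_norm_sub_mul_of_continuous (hfi : Integrable f) (hfc : Continuous f)
    (x : E2) : Integrable fun y => ‖x - y‖⁻¹ * f y := by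
  obtain ⟨M, hM⟩ := (isCompact_closedBall x 1).exists_bound_of_continuousOn hfc.continuousOn
  exact integrable_inv_norm_sub_mul hfi one_pos fun y hy => hM y (ball_subset_closedBall hy)

theorem integrable_gradKernel_sub_mul_of_continuous (hfi : Integrable f) (hfc : Continuous f)
    (x : E2) (j : Fin 2) : Integrable fun y => gradKernel j (x - y) * f y := by
  obtain ⟨M, hM⟩ := (isCompact_closedBall x 1).exists_bound_of_continuousOn hfc.continuousOn
  exact integrable_gradKernel_sub_mul hfi one_pos (fun y hy => hM y (ball_subset_closedBall hy)) j

theorem norm_mul_integral_inv_norm_sub_mul_le (hfi : Integrable f) (h0 : ∀ y, 0 ≤ f y) {D : ℝ}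
    (hD : ∀ y, f y * ‖y‖ ^ 2 ≤ D) (x : E2) :
    ‖x‖ * ∫ y, ‖x - y‖⁻¹ * f y ≤ 2 * (∫ y, f y) + 4 * π * D := by
  have D_nonneg : 0 ≤ D := by simpa using hD 0
  have mass_nonneg : 0 ≤ ∫ y, f y := integral_nonneg h0
  rcases (norm_nonneg x).eq_or_lt' with hx | hx
  · rw [hx, zero_mul]
    positivity
  have near_le : ∀ y ∈ ball x (‖x‖ / 2), f y ≤ 4 * D / ‖x‖ ^ 2 := by
    intro y hy
    rw [mem_ball, dist_comm, dist_eq_norm] at hy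
    have : ‖x‖ ^ 2 ≤ (2 * ‖y‖) ^ 2 := by
      gcongr
      linarith [norm_sub_norm_le x y]
    rw [le_div_iff₀ (by positivity)]
    nlinarith [hD y, h0 y]
  have int_all : Integrable fun y => 2 / ‖x‖ * f y := hfi.const_mul _
  have int_near : Integrable fun y =>
      4 * D / ‖x‖ ^ 2 * (ball x (‖x‖ / 2)).indicator (fun y => ‖x - y‖⁻¹) y :=
    ((integrable_indicator_iff measurableSet_ball).2
      (integrableOn_inv_norm_sub_ball x (‖x‖ / 2))).const_mul _
  have bound : ∫ y, ‖x - y‖⁻¹ * f y ≤ ∫ y, (2 / ‖x‖ * f y +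
      4 * D / ‖x‖ ^ 2 * (ball x (‖x‖ / 2)).indicator (fun y => ‖x - y‖⁻¹) y) := by
    refine integral_mono_of_nonneg (.of_forall fun y => mul_nonneg (by positivity) (h0 y))
      (int_all.fun_add int_near) (.of_forall fun y => ?_)
    by_cases hy : y ∈ ball x (‖x‖ / 2)
    · simp only [Set.indicator_of_mem hy]
      rw [mul_comm]
      exact (mul_le_mul_of_nonneg_right (near_le y hy) (by positivity)).trans
        (le_add_of_nonneg_left (mul_nonneg (by positivity) (h0 y)))
    · simp only [Set.indicator_of_notMem hy, mul_zero, add_zero]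
      exact mul_le_mul_of_nonneg_right (inv_norm_sub_le_of_notMem_ball hx hy) (h0 y)
  rw [integral_add int_all int_near, integral_const_mul, integral_const_mul,
    integral_indicator measurableSet_ball,
    setIntegral_inv_norm_sub_ball x (half_pos hx).le] at bound
  calc _ ≤ ‖x‖ * (2 / ‖x‖ * (∫ y, f y) + 4 * D / ‖x‖ ^ 2 * (2 * π * (‖x‖ / 2))) := by gcongr
    _ = _ := by field_simp

theorem abs_sum_mul_gradKernel_le (x z : E2) :
    |∑ j, x j * gradKernel j z| ≤ 2 * (‖x‖ * ‖z‖⁻¹) := by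
  rw [Fin.sum_univ_two, two_mul]
  refine (abs_add_le _ _).trans (add_le_add ?_ ?_) <;>
  · rw [abs_mul]
    exact mul_le_mul (PiLp.norm_apply_le x _) (abs_gradKernel_le _ z) (abs_nonneg _)
      (norm_nonneg x)

theorem sum_mul_gradKernel_sub_add {x y : E2} (hxy : x ≠ y) :
    ∑ j, x j * gradKernel j (x - y) + ∑ j, y j * gradKernel j (y - x) = 1 := by
  rw [← sum_mul_gradKernel_self (sub_ne_zero.2 hxy), ← Finset.sum_add_distrib]
  refine Finset.sum_congr rfl fun j _ => ?_
  rw [← neg_sub x y, gradKernel_neg, PiLp.sub_apply]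
  ring

theorem integrable_sum_mul_gradKernel_sub_mul (hfi : Integrable f) (hfc : Continuous f)
    (h0 : ∀ y, 0 ≤ f y) {D : ℝ} (hD : ∀ y, f y * ‖y‖ ^ 2 ≤ D) :
    Integrable (fun p : E2 × E2 => (∑ j, p.1 j * gradKernel j (p.1 - p.2)) * (f p.2 * f p.1))
      (volume.prod volume) := by
  have meas : Measurable fun p : E2 × E2 =>
      (∑ j, p.1 j * gradKernel j (p.1 - p.2)) * (f p.2 * f p.1) := by
    have := hfc.measurable
    have (j : Fin 2) : Measurable fun p : E2 × E2 => gradKernel j (p.1 - p.2) :=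
      (measurable_gradKernel j).comp (by fun_prop)
    fun_prop
  have meas_majorant : AEStronglyMeasurable (fun p : E2 × E2 =>
      2 * ‖p.1‖ * f p.1 * (‖p.1 - p.2‖⁻¹ * f p.2)) (volume.prod volume) := by
    have := hfc.measurable
    exact Measurable.aestronglyMeasurable (by fun_prop)
  have majorant : Integrable (fun p : E2 × E2 =>
      2 * ‖p.1‖ * f p.1 * (‖p.1 - p.2‖⁻¹ * f p.2)) (volume.prod volume) := by
    refine (integrable_prod_iff meas_majorant).2 ⟨.of_forall fun x =>
      (integrable_inv_norm_sub_mul_of_continuous hfi hfc x).const_mul (2 * ‖x‖ * f x), ?_⟩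
    refine (hfi.const_mul (2 * (2 * (∫ y, f y) + 4 * π * D))).mono'
      meas_majorant.norm.integral_prod_right' (.of_forall fun x => ?_)
    have inner_nonneg (y : E2) : 0 ≤ 2 * ‖x‖ * f x * (‖x - y‖⁻¹ * f y) := by
      have := h0 x
      have := h0 y
      positivity
    simp only [Real.norm_of_nonneg (inner_nonneg _)]
    rw [Real.norm_of_nonneg (integral_nonneg inner_nonneg), integral_const_mul]
    nlinarith [mul_le_mul_of_nonneg_right
      (norm_mul_integral_inv_norm_sub_mul_le hfi h0 hD x) (h0 x)]
  refine majorant.mono' meas.aestronglyMeasurable (.of_forall fun p => ?_)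
  have mass_nonneg : 0 ≤ f p.2 * f p.1 := mul_nonneg (h0 _) (h0 _)
  rw [Real.norm_eq_abs, abs_mul, abs_of_nonneg mass_nonneg]
  refine (mul_le_mul_of_nonneg_right (abs_sum_mul_gradKernel_le p.1 (p.1 - p.2))
    mass_nonneg).trans_eq ?_
  ring

theorem integral_prod_sum_mul_gradKernel_sub_mul (hfi : Integrable f) (hfc : Continuous f)
    (h0 : ∀ y, 0 ≤ f y) {D : ℝ} (hD : ∀ y, f y * ‖y‖ ^ 2 ≤ D) :
    ∫ p : E2 × E2, (∑ j, p.1 j * gradKernel j (p.1 - p.2)) * (f p.2 * f p.1) =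
      (∫ y, f y) ^ 2 / 2 := by
  set G : E2 × E2 → ℝ := fun p => (∑ j, p.1 j * gradKernel j (p.1 - p.2)) * (f p.2 * f p.1)
  have int : Integrable G := integrable_sum_mul_gradKernel_sub_mul hfi hfc h0 hD
  have off_diagonal : ∀ᵐ p : E2 × E2, p.1 ≠ p.2 := by
    have diagonal_null : (volume : Measure (E2 × E2)) (Set.diagonal E2) = 0 :=
      (Measure.measure_prod_null measurableSet_diagonal).2 (.of_forall fun x => by
        have : Prod.mk x ⁻¹' Set.diagonal E2 = {x} := by ext; simp [eq_comm]
        simp [this])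
    exact measure_eq_zero_iff_ae_notMem.1 diagonal_null
  have symmetrized : ∫ p, (G p + G p.swap) = ∫ p : E2 × E2, f p.1 * f p.2 := by
    refine integral_congr_ae ?_
    filter_upwards [off_diagonal] with p hp
    simp only [G, Prod.fst_swap, Prod.snd_swap]
    linear_combination f p.1 * f p.2 * sum_mul_gradKernel_sub_add hp
  have swap : ∫ p : E2 × E2, G p.swap = ∫ p, G p := integral_prod_swap G
  have product : ∫ p : E2 × E2, f p.1 * f p.2 = (∫ y, f y) * ∫ y, f y := integral_prod_mul f f
  have int_swap : Integrable fun p : E2 × E2 => G p.swap := int.swap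
  rw [integral_add int int_swap, swap, product] at symmetrized
  linarith

theorem integral_sum_mul_integral_gradKernel_mul (hfi : Integrable f) (hfc : Continuous f)
    (h0 : ∀ y, 0 ≤ f y) {D : ℝ} (hD : ∀ y, f y * ‖y‖ ^ 2 ≤ D) :
    Integrable (fun x : E2 => (∑ j, x j * ∫ y, gradKernel j (x - y) * f y) * f x) ∧
      ∫ x : E2, (∑ j, x j * ∫ y, gradKernel j (x - y) * f y) * f x = (∫ y, f y) ^ 2 / 2 := by
  have int := integrable_sum_mul_gradKernel_sub_mul hfi hfc h0 hD
  have inner_eq (x : E2) : ∫ y, (∑ j, x j * gradKernel j (x - y)) * (f y * f x) =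
      (∑ j, x j * ∫ y, gradKernel j (x - y) * f y) * f x := by
    have regroup (y : E2) : (∑ j, x j * gradKernel j (x - y)) * (f y * f x) =
        (∑ j, x j * (gradKernel j (x - y) * f y)) * f x := by
      simp only [Finset.sum_mul, mul_assoc]
    simp only [regroup]
    rw [integral_mul_const, integral_finsetSum _ fun j _ =>
      (integrable_gradKernel_sub_mul_of_continuous hfi hfc x j).const_mul _]
    simp only [integral_const_mul]
  have outer := int.integral_prod_left
  have value := integral_prod_sum_mul_gradKernel_sub_mul hfi hfc h0 hD
  rw [Measure.volume_eq_prod, integral_prod _ int] at value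
  simp only [inner_eq] at outer value
  exact ⟨outer, value⟩

theorem integral_const_mul_exp_eq_eight_pi {u : E2 → ℝ} {a D : ℝ} (ha : 0 < a)
    (hu : ContDiff ℝ 1 u) (hi : Integrable fun y => a * Real.exp (u y))
    (hD : ∀ y, a * Real.exp (u y) * ‖y‖ ^ 2 ≤ D)
    (hrep : ∀ j x, pd j u x =
      -(1 / (2 * π)) * ∫ y, gradKernel j (x - y) * (a * Real.exp (u y))) :
    ∫ y, a * Real.exp (u y) = 8 * π := by
  set f : E2 → ℝ := fun y => a * Real.exp (u y)
  have f_smooth : ContDiff ℝ 1 f := contDiff_const.mul hu.exp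
  have f_pos (y : E2) : 0 < f y := by positivity
  have mass_pos : 0 < ∫ y, f y := by
    rw [integral_pos_iff_support_of_nonneg (fun y => (f_pos y).le) hi]
    simp [Function.support, (f_pos _).ne']
  obtain ⟨radial_integrable, radial_integral⟩ := integral_sum_mul_integral_gradKernel_mul hi
    f_smooth.continuous (fun y => (f_pos y).le) hD
  have radial_eq : (fun x => fderiv ℝ f x x) = fun x =>
      -(1 / (2 * π)) * ((∑ j, x j * ∫ y, gradKernel j (x - y) * f y) * f x) := by
    ext x
    have : fderiv ℝ f x = f x • fderiv ℝ u x := by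
      rw [((hu.differentiable one_ne_zero x).hasFDerivAt.exp.const_mul a).fderiv, smul_smul]
    rw [this, smul_apply, fderiv_apply_eq_sum_pd]
    simp only [hrep, Fin.sum_univ_two, smul_eq_mul]
    ring
  have dilation := integral_fderiv_apply_self f_smooth hi
    (radial_eq ▸ radial_integrable.const_mul _)
  rw [radial_eq, integral_const_mul, radial_integral, finrank_euclideanSpace_fin, smul_eq_mul]
    at dilation
  push_cast at dilation
  field_simp at dilation
  linarith

/-! ### Locally uniform limits of densities -/

theorem tendsto_setIntegral_of_tendstoUniformlyOn {ι X E : Type*} [MeasurableSpace X]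
    [NormedAddCommGroup E] [NormedSpace ℝ E] {μ : Measure X} {l : Filter ι} {F : ι → X → E}
    {f : X → E} {s : Set X} (hs : μ s < ⊤) (hF : ∀ i, IntegrableOn (F i) s μ)
    (hf : IntegrableOn f s μ) (hlim : TendstoUniformlyOn F f l s) :
    Tendsto (fun i => ∫ x in s, F i x ∂μ) l (𝓝 (∫ x in s, f x ∂μ)) := by
  rw [Metric.tendsto_nhds]
  intro e he
  have mass_pos : 0 < μ.real s + 1 := by positivity
  filter_upwards [Metric.tendstoUniformlyOn_iff.1 hlim (e / (μ.real s + 1)) (by positivity)]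
    with i hi
  rw [dist_eq_norm, ← integral_sub (hF i) hf]
  calc ‖∫ x in s, (F i x - f x) ∂μ‖ ≤ e / (μ.real s + 1) * μ.real s :=
        norm_setIntegral_le_of_norm_le_const hs fun x hx => by
          rw [← dist_eq_norm, dist_comm]; exact (hi x hx).le
    _ < e := by rw [div_mul_eq_mul_div, div_lt_iff₀ mass_pos]; linarith

section
variable {X : Type*} [MetricSpace X] [MeasurableSpace X] [OpensMeasurableSpace X]
  {μ : Measure X} {f : X → ℝ}

theorem tendsto_setIntegral_closedBall_atTop (hf : Integrable f μ) (x : X) :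
    Tendsto (fun k : ℝ => ∫ y in closedBall x k, f y ∂μ) atTop (𝓝 (∫ y, f y ∂μ)) :=
  (aecover_closedBall tendsto_id).integral_tendsto_of_countably_generated hf

theorem integrable_of_tendstoUniformlyOn_closedBall [ProperSpace X] [IsFiniteMeasureOnCompacts μ]
    {ι : Type*} {l : Filter ι} [l.NeBot] {F : ι → X → ℝ} {B : ℝ} (x : X)
    (hF : ∀ i, Integrable (F i) μ) (h0 : ∀ᶠ i in l, ∀ y, 0 ≤ F i y)
    (hB : ∀ᶠ i in l, ∫ y, F i y ∂μ ≤ B) (hf : Continuous f)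
    (hlim : ∀ k : ℝ, TendstoUniformlyOn F f l (closedBall x k)) :
    Integrable f μ := by
  have f_local (k : ℝ) : IntegrableOn f (closedBall x k) μ :=
    hf.continuousOn.integrableOn_compact (isCompact_closedBall x k)
  have f_nonneg (y : X) : 0 ≤ f y := by
    refine ge_of_tendsto ((hlim (dist y x)).tendsto_at (mem_closedBall.2 le_rfl)) ?_
    filter_upwards [h0] with i hi using hi y
  have mass_le (k : ℝ) : ∫ y in closedBall x k, f y ∂μ ≤ B := by
    refine le_of_tendsto (tendsto_setIntegral_of_tendstoUniformlyOn measure_closedBall_lt_top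
      (fun i => (hF i).integrableOn) (f_local k) (hlim k)) ?_
    filter_upwards [h0, hB] with i hi hBi
    exact (setIntegral_le_integral (hF i) (.of_forall hi)).trans hBi
  exact (aecover_closedBall (x := x) tendsto_id).integrable_of_integral_bounded_of_nonneg_ae B
    f_local (.of_forall f_nonneg) (.of_forall mass_le)

end

theorem abs_integral_gradKernel_sub_mul_le {g : E2 → ℝ} {x : E2} {k e : ℝ} (hg : Integrable g)
    (hk : ‖x‖ < k) (he : ∀ y ∈ closedBall (0 : E2) k, |g y| ≤ e) (j : Fin 2) :
    |∫ y, gradKernel j (x - y) * g y| ≤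
      2 * π * (k + ‖x‖ + 1) * e + (k - ‖x‖)⁻¹ * ∫ y, |g y| := by
  set S := ball x (k + ‖x‖ + 1)
  have e_nonneg : 0 ≤ e := (abs_nonneg _).trans
    (he 0 (mem_closedBall_self ((norm_nonneg x).trans hk.le)))
  have gap_pos : 0 < k - ‖x‖ := sub_pos.2 hk
  have closedBall_subset : closedBall (0 : E2) k ⊆ S := by
    intro y hy
    rw [mem_closedBall_zero_iff] at hy
    rw [mem_ball, dist_eq_norm]
    linarith [norm_sub_le y x]
  have near_integrable : Integrable (S.indicator fun y => ‖x - y‖⁻¹ * e) :=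
    (integrable_indicator_iff measurableSet_ball).2
      ((integrableOn_inv_norm_sub_ball x _).mul_const e)
  have far_integrable : Integrable fun y => (k - ‖x‖)⁻¹ * |g y| := hg.abs.const_mul _
  have pointwise (y : E2) : ‖gradKernel j (x - y) * g y‖ ≤
      S.indicator (fun y => ‖x - y‖⁻¹ * e) y + (k - ‖x‖)⁻¹ * |g y| := by
    rw [Real.norm_eq_abs, abs_mul]
    by_cases hy : y ∈ closedBall (0 : E2) k
    · rw [Set.indicator_of_mem (closedBall_subset hy)]
      have := mul_le_mul (abs_gradKernel_le j (x - y)) (he y hy) (abs_nonneg _) (by positivity)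
      have : 0 ≤ (k - ‖x‖)⁻¹ * |g y| := by positivity
      linarith
    · have far : k - ‖x‖ ≤ ‖x - y‖ := by
        rw [mem_closedBall_zero_iff] at hy
        linarith [norm_sub_norm_le y x, norm_sub_rev y x]
      have : |gradKernel j (x - y)| ≤ (k - ‖x‖)⁻¹ :=
        (abs_gradKernel_le j _).trans (inv_anti₀ gap_pos far)
      have := mul_le_mul_of_nonneg_right this (abs_nonneg (g y))
      have : 0 ≤ S.indicator (fun y => ‖x - y‖⁻¹ * e) y :=
        Set.indicator_nonneg (fun y _ => by positivity) y
      linarith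
  refine (norm_integral_le_of_norm_le (near_integrable.add far_integrable)
    (.of_forall pointwise)).trans_eq ?_
  rw [integral_add' near_integrable far_integrable, integral_indicator measurableSet_ball,
    integral_mul_const, setIntegral_inv_norm_sub_ball x (by linarith [norm_nonneg x]),
    integral_const_mul]

theorem tendsto_integral_gradKernel_sub_mul {ι : Type*} {l : Filter ι} {F : ι → E2 → ℝ}
    {f : E2 → ℝ} {B : ℝ} (hF : ∀ i, Integrable (F i)) (hFc : ∀ i, Continuous (F i))
    (hf : Integrable f) (hfc : Continuous f) (hB : ∀ᶠ i in l, ∫ y, |F i y - f y| ≤ B)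
    (hlim : ∀ k : ℝ, TendstoUniformlyOn F f l (closedBall 0 k)) (x : E2) (j : Fin 2) :
    Tendsto (fun i => ∫ y, gradKernel j (x - y) * F i y) l
      (𝓝 (∫ y, gradKernel j (x - y) * f y)) := by
  rw [Metric.tendsto_nhds]
  intro e he
  set k := ‖x‖ + (2 * |B| / e + 1) with k_def
  have hk : ‖x‖ < k := by rw [k_def]; linarith [show 0 ≤ 2 * |B| / e by positivity]
  set W := 2 * π * (k + ‖x‖ + 1)
  have W_pos : 0 < W := by
    have : 0 < k + ‖x‖ + 1 := by linarith [norm_nonneg x]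
    positivity
  have far_lt : (k - ‖x‖)⁻¹ * B < e / 2 := by
    have : k - ‖x‖ = 2 * |B| / e + 1 := by ring
    rw [this, inv_mul_lt_iff₀ (by positivity)]
    have : (2 * |B| / e + 1) * (e / 2) = |B| + e / 2 := by field_simp
    linarith [le_abs_self B]
  filter_upwards [hB, Metric.tendstoUniformlyOn_iff.1 (hlim k) (e / (2 * W)) (by positivity)]
    with i hBi hi
  have difference : (∫ y, gradKernel j (x - y) * F i y) - ∫ y, gradKernel j (x - y) * f y =
      ∫ y, gradKernel j (x - y) * (F i y - f y) := by
    rw [← integral_sub (integrable_gradKernel_sub_mul_of_continuous (hF i) (hFc i) x j)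
      (integrable_gradKernel_sub_mul_of_continuous hf hfc x j)]
    simp only [mul_sub]
  have near_le (y) (hy : y ∈ closedBall (0 : E2) k) : |F i y - f y| ≤ e / (2 * W) := by
    rw [← Real.dist_eq, dist_comm]
    exact (hi y hy).le
  rw [Real.dist_eq, difference]
  calc |∫ y, gradKernel j (x - y) * (F i y - f y)|
      ≤ W * (e / (2 * W)) + (k - ‖x‖)⁻¹ * ∫ y, |F i y - f y| :=
        abs_integral_gradKernel_sub_mul_le ((hF i).sub hf) hk near_le j
    _ ≤ e / 2 + (k - ‖x‖)⁻¹ * B := by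
        have : 0 ≤ (k - ‖x‖)⁻¹ := inv_nonneg.2 (sub_nonneg.2 hk.le)
        have : W * (e / (2 * W)) = e / 2 := by field_simp
        rw [this]
        gcongr
    _ < e := by linarith

theorem setIntegral_ball_le_of_sub_le_setIntegral_closedBall {f : E2 → ℝ} {k m S t ρ : ℝ} {x : E2}
    (hf : IntegrableOn f (ball 0 S)) (h0 : ∀ y ∈ ball (0 : E2) S, 0 ≤ f y) (hk : k < S)
    (hin : m - t ≤ ∫ y in closedBall 0 k, f y) (htot : ∫ y in ball 0 S, f y ≤ m)
    (hxS : ‖x‖ + ρ ≤ S) (hkx : k + ρ ≤ ‖x‖) : ∫ y in ball x ρ, f y ≤ t := by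
  have disjoint : Disjoint (closedBall 0 k) (ball x ρ) :=
    closedBall_disjoint_ball (by simpa using hkx)
  have := setIntegral_add_setIntegral_le hf h0 measurableSet_ball measurableSet_ball disjoint
    (closedBall_subset_ball hk) (ball_subset_ball' (by simpa [add_comm] using hxS))
  linarith

theorem exists_const_mul_exp_mul_norm_sq_le {u : E2 → ℝ} {a : ℝ} (ha : 0 < a)
    (hu : ContDiff ℝ 2 u) (hpde : ∀ x, -lapl u x = a * Real.exp (u x))
    (hi : Integrable fun y => a * Real.exp (u y)) :
    ∃ D, ∀ y, a * Real.exp (u y) * ‖y‖ ^ 2 ≤ D := by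
  set f : E2 → ℝ := fun y => a * Real.exp (u y)
  have f_continuous : Continuous f := continuous_const.mul hu.continuous.rexp
  have f_nonneg (y : E2) : 0 ≤ f y := by positivity
  obtain ⟨k, hk, tail⟩ := ((eventually_gt_atTop 0).and
    ((tendsto_setIntegral_closedBall_atTop hi (0 : E2)).eventually
      (lt_mem_nhds (sub_one_lt (∫ y, f y))))).exists
  obtain ⟨D, hD⟩ := (isCompact_closedBall (0 : E2) (2 * k)).exists_bound_of_continuousOn
    (f := fun y => f y * ‖y‖ ^ 2) (by fun_prop)
  refine ⟨max D 16, fun y => ?_⟩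
  rcases le_or_gt ‖y‖ (2 * k) with hy | hy
  · exact ((le_abs_self _).trans (hD y (mem_closedBall_zero_iff.2 hy))).trans (le_max_left _ _)
  · have y_pos : 0 < ‖y‖ := by linarith
    have small_mass : ∫ z in ball y (‖y‖ / 2), f z ≤ 1 :=
      setIntegral_ball_le_of_sub_le_setIntegral_closedBall (S := 2 * ‖y‖) (k := k)
        hi.integrableOn (fun z _ => f_nonneg z) (by linarith) tail.le
        (setIntegral_le_integral hi (.of_forall f_nonneg)) (by linarith) (by linarith)
    have := neg_lapl_le_of_setIntegral_le hu (Λ := 1) (η := 1) (half_pos y_pos) ha one_pos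
      (fun z _ => by simp [hpde]) (by norm_num) (by simpa only [hpde] using small_mass)
    rw [hpde, le_div_iff₀ (by positivity)] at this
    refine le_max_of_le_right ?_
    linarith

/-! ### The far field of the cut-off density -/

section
variable {R : ℝ} {z : E2 → ℝ} {x : E2}

theorem cutoffDensity_eq_zero (hR : 0 < R) (hx : 7 / 16 * R ≤ ‖x‖) : cutoffDensity R z x = 0 := by
  rw [cutoffDensity, cutoff.zero_of_le_dist, zero_mul]
  rwa [dist_zero_right, norm_smul, norm_inv, Real.norm_of_nonneg hR.le, inv_mul_eq_div,
    le_div_iff₀ hR]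

theorem cutoffDensity_eq_neg_lapl (hR : 0 < R) (hx : ‖x‖ ≤ 5 / 16 * R) :
    cutoffDensity R z x = -lapl z x := by
  rw [cutoffDensity, cutoff.one_of_mem_closedBall, one_mul]
  rwa [mem_closedBall_zero_iff, norm_smul, norm_inv, Real.norm_of_nonneg hR.le, inv_mul_eq_div,
    div_le_iff₀ hR]

theorem continuous_cutoffDensity (R : ℝ) (hz : ContDiff ℝ 2 z) :
    Continuous (cutoffDensity R z) :=
  (cutoff.continuous.comp (continuous_const_smul _)).mul (continuous_lapl hz).neg

theorem integrable_cutoffDensity (hR : 0 < R) (hz : ContDiff ℝ 2 z) :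
    Integrable (cutoffDensity R z) :=
  (continuous_cutoffDensity R hz).integrable_of_hasCompactSupport <|
    .intro (isCompact_closedBall (0 : E2) (7 / 16 * R)) fun _ hx =>
      cutoffDensity_eq_zero hR (not_le.1 (mt mem_closedBall_zero_iff.2 hx)).le

theorem cutoffDensity_nonneg (hR : 0 < R)
    (h0 : ∀ y ∈ ball (0 : E2) (15 / 32 * R), 0 ≤ -lapl z y) (x : E2) : 0 ≤ cutoffDensity R z x := by
  by_cases hx : x ∈ ball (0 : E2) (15 / 32 * R)
  · exact mul_nonneg cutoff.nonneg (h0 x hx)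
  · rw [mem_ball_zero_iff, not_lt] at hx
    rw [cutoffDensity_eq_zero hR (by linarith)]

theorem cutoffDensity_le_neg_lapl (hx : 0 ≤ -lapl z x) : cutoffDensity R z x ≤ -lapl z x :=
  mul_le_of_le_one_left hx cutoff.le_one

theorem integral_cutoffDensity_le (hR : 0 < R) (hz : ContDiff ℝ 2 z)
    (h0 : ∀ y ∈ ball (0 : E2) (15 / 32 * R), 0 ≤ -lapl z y) :
    ∫ y, cutoffDensity R z y ≤ ∫ y in ball (0 : E2) (15 / 32 * R), -lapl z y := by
  rw [← setIntegral_eq_integral_of_forall_compl_eq_zero (s := ball (0 : E2) (15 / 32 * R))]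
  · exact setIntegral_mono_on (integrable_cutoffDensity hR hz).integrableOn
      (((continuous_lapl hz).neg.continuousOn.integrableOn_compact
        (isCompact_closedBall _ _)).mono_set ball_subset_closedBall)
      measurableSet_ball fun y hy => cutoffDensity_le_neg_lapl (h0 y hy)
  · intro y hy
    rw [mem_ball_zero_iff, not_lt] at hy
    exact cutoffDensity_eq_zero hR (by linarith)

variable {a Λ M k η : ℝ}

theorem neg_lapl_le_of_concentrated_mass (hz : ContDiff ℝ 2 z) (ha : 0 < a) (hΛ : 0 < Λ)
    (hl : ∀ y ∈ ball (0 : E2) R,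
      a * Real.exp (z y) ≤ -lapl z y ∧ -lapl z y ≤ Λ * (a * Real.exp (z y)))
    (hη : 3 * η ≤ 1 / Λ) (hin : M - 2 * η ≤ ∫ y in closedBall 0 k, -lapl z y)
    (htot : ∫ y in ball 0 R, -lapl z y ≤ M + η) (hx : 0 < ‖x‖) (hkx : 4 / 3 * k ≤ ‖x‖)
    (hkR : k < R) (hxR : 5 / 4 * ‖x‖ ≤ R) :
    -lapl z x ≤ 192 * Λ * η / ‖x‖ ^ 2 := by
  have small_mass : ∫ y in ball x (‖x‖ / 4), -lapl z y ≤ 3 * η :=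
    setIntegral_ball_le_of_sub_le_setIntegral_closedBall (m := M + η)
      (((continuous_lapl hz).neg.continuousOn.integrableOn_compact
        (isCompact_closedBall _ _)).mono_set ball_subset_closedBall)
      (fun y hy => le_trans (by positivity) (hl y hy).1) hkR (by linarith) htot
      (by linarith) (by linarith)
  have ball_subset : ball x (‖x‖ / 4) ⊆ ball 0 R :=
    ball_subset_ball' (by rw [dist_zero_right]; linarith)
  refine (neg_lapl_le_of_setIntegral_le hz (by positivity) ha hΛ
    (fun y hy => hl y (ball_subset hy)) hη small_mass).trans_eq ?_
  field_simp
  ring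

theorem abs_integral_gradKernel_sub_mul_cutoffDensity_sub_mass_le (hR : 0 < R)
    (hz : ContDiff ℝ 2 z) (ha : 0 < a) (hΛ : 0 < Λ)
    (hl : ∀ y ∈ ball (0 : E2) (15 / 32 * R),
      a * Real.exp (z y) ≤ -lapl z y ∧ -lapl z y ≤ Λ * (a * Real.exp (z y)))
    (hk : 0 < k) (hη₀ : 0 < η) (hη : 3 * η ≤ 1 / Λ)
    (hin : M - 2 * η ≤ ∫ y in closedBall 0 k, cutoffDensity R z y)
    (htot : ∫ y in ball 0 (15 / 32 * R), -lapl z y ≤ M + η)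
    (hkx : 4 * k ≤ ‖x‖) (hxR : ‖x‖ ≤ R / 4) (j : Fin 2) :
    |(∫ y, gradKernel j (x - y) * cutoffDensity R z y) - M * gradKernel j x| ≤
      (4 * k * (M + η) / ‖x‖ + 11 * η + π * (768 * Λ * η)) / ‖x‖ := by
  have h0 : ∀ y ∈ ball (0 : E2) (15 / 32 * R), 0 ≤ -lapl z y :=
    fun y hy => le_trans (by positivity) (hl y hy).1
  have hin' : M - 2 * η ≤ ∫ y in closedBall 0 k, -lapl z y := by
    refine hin.trans_eq (setIntegral_congr_fun measurableSet_closedBall fun y hy => ?_)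
    exact cutoffDensity_eq_neg_lapl hR (by linarith [mem_closedBall_zero_iff.1 hy])
  refine abs_integral_gradKernel_sub_mul_sub_mass_le (integrable_cutoffDensity hR hz)
    (cutoffDensity_nonneg hR h0) hk hkx hin
    ((integral_cutoffDensity_le hR hz h0).trans htot) (fun y hy => ?_) j
  rw [mem_ball, dist_eq_norm] at hy
  have y_lower : ‖x‖ / 2 ≤ ‖y‖ := by linarith [norm_sub_norm_le x y, norm_sub_rev x y]
  have y_upper : ‖y‖ ≤ 3 / 2 * ‖x‖ := by linarith [norm_sub_norm_le y x]
  calc cutoffDensity R z y ≤ -lapl z y :=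
        cutoffDensity_le_neg_lapl (h0 y (mem_ball_zero_iff.2 (by linarith)))
    _ ≤ 192 * Λ * η / ‖y‖ ^ 2 := neg_lapl_le_of_concentrated_mass hz ha hΛ hl hη hin' htot
        (by linarith) (by linarith) (by linarith) (by linarith)
    _ ≤ 192 * Λ * η / (‖x‖ / 2) ^ 2 := by
        have : 0 < ‖x‖ / 2 := by linarith
        gcongr
    _ = 768 * Λ * η / ‖x‖ ^ 2 := by ring

end

/-! ### Gradient asymptotics of a rescaled blow-up -/

/-- A sequence `Z i` of solutions of `-Δ Z i = W i * exp (Z i)` on the large discs `ball 0 (R i)`,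
with `W i` pinched between two comparable constants, that carries asymptotically at most the mass
`8π` and whose Laplacians and gradients converge to those of an entire solution `u₀` of
`-Δ u₀ = V₀ * exp u₀`. The functions `Z i` are normalised by their boundary values, not at the
origin, so only their derivatives converge; everything is required on `ball 0 (15 / 32 * R i)`,
which contains the support of `cutoffDensity (R i)`. -/
structure IsRescaledBlowUp (Z : ℕ → E2 → ℝ) (R : ℕ → ℝ) (u₀ : E2 → ℝ) (V₀ : ℝ) : Prop where
  contDiff (i : ℕ) : ContDiff ℝ 2 (Z i)
  radius_pos (i : ℕ) : 0 < R i
  tendsto_radius : Tendsto R atTop atTop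
  neg_lapl_bounds : ∃ Λ > 0, ∀ᶠ i in atTop, ∃ a > 0, ∀ y ∈ ball (0 : E2) (15 / 32 * R i),
    a * Real.exp (Z i y) ≤ -lapl (Z i) y ∧ -lapl (Z i) y ≤ Λ * (a * Real.exp (Z i y))
  mass_le (η : ℝ) (hη : 0 < η) : ∀ᶠ i in atTop,
    ∫ y in ball (0 : E2) (15 / 32 * R i), -lapl (Z i) y ≤ 8 * π + η
  annulus_le : ∃ A, ∀ᶠ i in atTop,
    ∫ ξ in {ξ : E2 | ‖ξ‖ ∈ Set.Icc (5 / 16 : ℝ) (7 / 16)}, |Z i (R i • ξ)| ≤ A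
  coeff_pos : 0 < V₀
  contDiff_limit : ContDiff ℝ 2 u₀
  neg_lapl_limit (x : E2) : -lapl u₀ x = V₀ * Real.exp (u₀ x)
  tendstoUniformlyOn_neg_lapl (k : ℝ) : TendstoUniformlyOn (fun i y => -lapl (Z i) y)
    (fun y => V₀ * Real.exp (u₀ y)) atTop (closedBall 0 k)
  tendsto_pd (j : Fin 2) (x : E2) : Tendsto (fun i => pd j (Z i) x) atTop (𝓝 (pd j u₀ x))

namespace IsRescaledBlowUp

variable {Z : ℕ → E2 → ℝ} {R : ℕ → ℝ} {u₀ : E2 → ℝ} {V₀ : ℝ}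

theorem continuous_limit_density (h : IsRescaledBlowUp Z R u₀ V₀) :
    Continuous fun y => V₀ * Real.exp (u₀ y) :=
  continuous_const.mul h.contDiff_limit.continuous.rexp

theorem eventually_neg_lapl_nonneg (h : IsRescaledBlowUp Z R u₀ V₀) :
    ∀ᶠ i in atTop, ∀ y ∈ ball (0 : E2) (15 / 32 * R i), 0 ≤ -lapl (Z i) y := by
  obtain ⟨Λ, -, bounds⟩ := h.neg_lapl_bounds
  filter_upwards [bounds] with i ⟨a, ha, hi⟩ y hy
  exact le_trans (by positivity) (hi y hy).1

theorem eventually_cutoffDensity_nonneg (h : IsRescaledBlowUp Z R u₀ V₀) :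
    ∀ᶠ i in atTop, ∀ y, 0 ≤ cutoffDensity (R i) (Z i) y := by
  filter_upwards [h.eventually_neg_lapl_nonneg] with i hi
  exact cutoffDensity_nonneg (h.radius_pos i) hi

theorem eventually_integral_cutoffDensity_le (h : IsRescaledBlowUp Z R u₀ V₀) {η : ℝ}
    (hη : 0 < η) : ∀ᶠ i in atTop, ∫ y, cutoffDensity (R i) (Z i) y ≤ 8 * π + η := by
  filter_upwards [h.eventually_neg_lapl_nonneg, h.mass_le η hη] with i hi mass
  exact (integral_cutoffDensity_le (h.radius_pos i) (h.contDiff i) hi).trans mass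

theorem tendstoUniformlyOn_cutoffDensity (h : IsRescaledBlowUp Z R u₀ V₀) (k : ℝ) :
    TendstoUniformlyOn (fun i => cutoffDensity (R i) (Z i)) (fun y => V₀ * Real.exp (u₀ y)) atTop
      (closedBall 0 k) := by
  refine (h.tendstoUniformlyOn_neg_lapl k).congr ?_
  filter_upwards [h.tendsto_radius.eventually_ge_atTop (16 / 5 * k)] with i hi y hy
  exact (cutoffDensity_eq_neg_lapl (h.radius_pos i)
    (by linarith [mem_closedBall_zero_iff.1 hy])).symm

theorem integrable_limit_density (h : IsRescaledBlowUp Z R u₀ V₀) :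
    Integrable fun y => V₀ * Real.exp (u₀ y) :=
  integrable_of_tendstoUniformlyOn_closedBall 0
    (fun i => integrable_cutoffDensity (h.radius_pos i) (h.contDiff i))
    h.eventually_cutoffDensity_nonneg (h.eventually_integral_cutoffDensity_le one_pos)
    h.continuous_limit_density h.tendstoUniformlyOn_cutoffDensity

theorem exists_eventually_abs_pd_add_potential_le (h : IsRescaledBlowUp Z R u₀ V₀) :
    ∃ C > 0, ∀ᶠ i in atTop, ∀ j x, ‖x‖ ≤ R i / 4 → |pd j (Z i) x +
      1 / (2 * π) * ∫ y, gradKernel j (x - y) * cutoffDensity (R i) (Z i) y| ≤ C / R i := by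
  obtain ⟨C, hC, bound⟩ := exists_abs_pd_add_integral_cutoffDensity_le
  obtain ⟨A, hA⟩ := h.annulus_le
  refine ⟨C * max A 1, by positivity, ?_⟩
  filter_upwards [hA] with i hi j x hx
  have radius_pos := h.radius_pos i
  refine (bound (Z i) (h.contDiff i) (R i) radius_pos x hx j).trans ?_
  rw [← div_mul_eq_mul_div]
  gcongr
  exact hi.trans (le_max_left _ _)

theorem pd_limit_eq_potential (h : IsRescaledBlowUp Z R u₀ V₀) (j : Fin 2) (x : E2) :
    pd j u₀ x = -(1 / (2 * π)) * ∫ y, gradKernel j (x - y) * (V₀ * Real.exp (u₀ y)) := by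
  obtain ⟨C, -, error⟩ := h.exists_eventually_abs_pd_add_potential_le
  have limit_nonneg (y : E2) : 0 ≤ V₀ * Real.exp (u₀ y) :=
    mul_nonneg h.coeff_pos.le (Real.exp_pos _).le
  have density_integrable (i : ℕ) := integrable_cutoffDensity (h.radius_pos i) (h.contDiff i)
  have difference_bounded : ∀ᶠ i in atTop,
      ∫ y, |cutoffDensity (R i) (Z i) y - V₀ * Real.exp (u₀ y)| ≤
        (8 * π + 1) + ∫ y, V₀ * Real.exp (u₀ y) := by
    filter_upwards [h.eventually_cutoffDensity_nonneg,
      h.eventually_integral_cutoffDensity_le one_pos] with i nonneg mass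
    refine le_trans ?_ (add_le_add_left mass _)
    rw [← integral_add (density_integrable i) h.integrable_limit_density]
    refine integral_mono ((density_integrable i).sub h.integrable_limit_density).abs
      ((density_integrable i).add h.integrable_limit_density) fun y => ?_
    exact (abs_sub _ _).trans_eq
      (by rw [abs_of_nonneg (nonneg y), abs_of_nonneg (limit_nonneg y)])
  have potentials := tendsto_integral_gradKernel_sub_mul density_integrable
    (fun i => continuous_cutoffDensity (R i) (h.contDiff i)) h.integrable_limit_density
    h.continuous_limit_density difference_bounded h.tendstoUniformlyOn_cutoffDensity x j
  have sum_tendsto_zero : Tendsto (fun i => pd j (Z i) x +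
      1 / (2 * π) * ∫ y, gradKernel j (x - y) * cutoffDensity (R i) (Z i) y) atTop (𝓝 0) := by
    refine squeeze_zero_norm' ?_ (h.tendsto_radius.const_div_atTop C)
    filter_upwards [error, h.tendsto_radius.eventually_ge_atTop (4 * ‖x‖)] with i hi radius_ge
    exact hi j x (by linarith)
  have := tendsto_nhds_unique ((h.tendsto_pd j x).add (potentials.const_mul (1 / (2 * π))))
    sum_tendsto_zero
  linarith

theorem integral_limit_density (h : IsRescaledBlowUp Z R u₀ V₀) :
    ∫ y, V₀ * Real.exp (u₀ y) = 8 * π := by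
  obtain ⟨D, hD⟩ := exists_const_mul_exp_mul_norm_sq_le h.coeff_pos h.contDiff_limit
    h.neg_lapl_limit h.integrable_limit_density
  exact integral_const_mul_exp_eq_eight_pi h.coeff_pos (h.contDiff_limit.of_le one_le_two)
    h.integrable_limit_density hD h.pd_limit_eq_potential

theorem exists_eventually_le_setIntegral_cutoffDensity (h : IsRescaledBlowUp Z R u₀ V₀) {η : ℝ}
    (hη : 0 < η) : ∃ k > 0, ∀ᶠ i in atTop,
      8 * π - η ≤ ∫ y in closedBall 0 k, cutoffDensity (R i) (Z i) y := by
  have limit_mass := tendsto_setIntegral_closedBall_atTop h.integrable_limit_density (0 : E2)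
  rw [h.integral_limit_density] at limit_mass
  obtain ⟨k, hk, mass⟩ := ((eventually_gt_atTop 0).and
    (limit_mass.eventually (lt_mem_nhds (sub_lt_self (8 * π) hη)))).exists
  have := tendsto_setIntegral_of_tendstoUniformlyOn measure_closedBall_lt_top
    (fun i => (integrable_cutoffDensity (h.radius_pos i) (h.contDiff i)).integrableOn)
    h.integrable_limit_density.integrableOn (h.tendstoUniformlyOn_cutoffDensity k)
  exact ⟨k, hk, (this.eventually (lt_mem_nhds mass)).mono fun _ => le_of_lt⟩

theorem exists_eventually_abs_potential_sub_le (h : IsRescaledBlowUp Z R u₀ V₀) {ε : ℝ}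
    (hε : 0 < ε) : ∃ k > 0, ∀ᶠ i in atTop, ∀ j x, k ≤ ‖x‖ → ‖x‖ ≤ R i / 4 →
      |(∫ y, gradKernel j (x - y) * cutoffDensity (R i) (Z i) y) - 8 * π * gradKernel j x| ≤
        ε / ‖x‖ := by
  obtain ⟨Λ, hΛ, bounds⟩ := h.neg_lapl_bounds
  set c := 12 + π * (768 * Λ)
  have c_pos : 0 < c := by positivity
  obtain ⟨η, hη, ηΛ, ηε⟩ : ∃ η > 0, 3 * η ≤ 1 / Λ ∧ c * η ≤ ε := by
    refine ⟨min (1 / (3 * Λ)) (ε / c), by positivity, ?_, ?_⟩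
    · calc 3 * min (1 / (3 * Λ)) (ε / c) ≤ 3 * (1 / (3 * Λ)) := by gcongr; exact min_le_left _ _
        _ = 1 / Λ := by field_simp
    · rw [← le_div_iff₀' c_pos]
      exact min_le_right _ _
  obtain ⟨k, hk, concentrated⟩ := h.exists_eventually_le_setIntegral_cutoffDensity
    (mul_pos two_pos hη)
  refine ⟨4 * k + 4 * k * (8 * π + η) / η, by positivity, ?_⟩
  filter_upwards [bounds, h.mass_le η hη, concentrated] with i ⟨a, ha, hi⟩ mass inner j x hkx hxR
  have k_le : 4 * k ≤ ‖x‖ := le_trans (le_add_of_nonneg_right (by positivity)) hkx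
  have x_pos : 0 < ‖x‖ := by linarith
  have moment_le : 4 * k * (8 * π + η) / ‖x‖ ≤ η := by
    rw [div_le_comm₀ x_pos hη]
    exact le_trans (le_add_of_nonneg_left (by positivity)) hkx
  refine (abs_integral_gradKernel_sub_mul_cutoffDensity_sub_mass_le (h.radius_pos i)
    (h.contDiff i) ha hΛ hi hk hη ηΛ inner mass k_le hxR j).trans ?_
  gcongr
  calc 4 * k * (8 * π + η) / ‖x‖ + 11 * η + π * (768 * Λ * η)
      ≤ η + 11 * η + π * (768 * Λ * η) := by gcongr
    _ = c * η := by ring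
    _ ≤ ε := ηε

theorem exists_eventually_abs_pd_add_gradKernel_le (h : IsRescaledBlowUp Z R u₀ V₀) :
    ∃ C > 0, ∀ ε > 0, ∃ k > 0, ∀ᶠ i in atTop, ∀ j x, k ≤ ‖x‖ → ‖x‖ ≤ R i / 4 →
      |pd j (Z i) x + 4 * gradKernel j x| ≤ ε / ‖x‖ + C / R i := by
  obtain ⟨C, hC, error⟩ := h.exists_eventually_abs_pd_add_potential_le
  refine ⟨C, hC, fun ε hε => ?_⟩
  obtain ⟨k, hk, potential⟩ := h.exists_eventually_abs_potential_sub_le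
    (mul_pos Real.two_pi_pos hε)
  refine ⟨k, hk, ?_⟩
  filter_upwards [error, potential] with i error potential j x hkx hxR
  set I := ∫ y, gradKernel j (x - y) * cutoffDensity (R i) (Z i) y
  have split : pd j (Z i) x + 4 * gradKernel j x =
      (pd j (Z i) x + 1 / (2 * π) * I) - 1 / (2 * π) * (I - 8 * π * gradKernel j x) := by
    field_simp
    ring
  have scaled : |1 / (2 * π) * (I - 8 * π * gradKernel j x)| ≤ ε / ‖x‖ := by
    rw [abs_mul, abs_of_pos (by positivity)]
    calc 1 / (2 * π) * |I - 8 * π * gradKernel j x| ≤ 1 / (2 * π) * (2 * π * ε / ‖x‖) := by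
          gcongr
          exact potential j x hkx hxR
      _ = ε / ‖x‖ := by field_simp
  rw [split]
  linarith [abs_sub (pd j (Z i) x + 1 / (2 * π) * I) (1 / (2 * π) * (I - 8 * π * gradKernel j x)),
    error j x hxR]

theorem exists_eventually_abs_pd_sub_pd_limit_le (h : IsRescaledBlowUp Z R u₀ V₀) :
    ∃ C > 0, ∀ ε > 0, ∃ k > 0, ∀ᶠ i in atTop, ∀ j x, k ≤ ‖x‖ → ‖x‖ ≤ R i / 4 →
      |pd j (Z i) x - pd j u₀ x| ≤ ε / ‖x‖ + C / R i := by
  obtain ⟨C, hC, asymptotics⟩ := h.exists_eventually_abs_pd_add_gradKernel_le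
  refine ⟨C, hC, fun ε hε => ?_⟩
  obtain ⟨k, hk, bound⟩ := asymptotics (ε / 2) (half_pos hε)
  have limit_bound (j : Fin 2) (x : E2) (hkx : k ≤ ‖x‖) :
      |pd j u₀ x + 4 * gradKernel j x| ≤ ε / 2 / ‖x‖ := by
    refine le_of_tendsto_of_tendsto ((h.tendsto_pd j x).add_const _).abs
      (by simpa using (h.tendsto_radius.const_div_atTop C).const_add (ε / 2 / ‖x‖)) ?_
    filter_upwards [bound, h.tendsto_radius.eventually_ge_atTop (4 * ‖x‖)] with i hi radius_ge
    exact hi j x hkx (by linarith)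
  refine ⟨k, hk, bound.mono fun i hi j x hkx hxR => ?_⟩
  have triangle := abs_sub (pd j (Z i) x + 4 * gradKernel j x) (pd j u₀ x + 4 * gradKernel j x)
  rw [add_sub_add_right_eq_sub] at triangle
  have : ε / 2 / ‖x‖ + ε / 2 / ‖x‖ = ε / ‖x‖ := by ring
  linarith [hi j x hkx hxR, limit_bound j x hkx]

end IsRescaledBlowUp

/-! ### Rescaling and extension -/

theorem tendsto_div_atTop_of_tendsto_div_nhds_zero {ι : Type*} {l : Filter ι} {f g : ι → ℝ}
    (hf : ∀ i, 0 < f i) (hg : ∀ i, 0 < g i) (h : Tendsto (fun i => f i / g i) l (𝓝 0)) :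
    Tendsto (fun i => g i / f i) l atTop :=
  (tendsto_nhdsWithin_iff.2 ⟨h, .of_forall fun i => div_pos (hf i) (hg i)⟩
    |>.inv_tendsto_nhdsGT_zero).congr fun i => inv_div (f i) (g i)

theorem eventually_forall_mem_ball_le_of_holder {ι E : Type*} [SeminormedAddCommGroup E]
    {l : Filter ι} {V : ι → E → ℝ} {x : ι → E} {δ : ι → ℝ} {A s V₀ m : ℝ} (hs : 0 < s)
    (hδ : Tendsto δ l (𝓝 0))
    (hV : ∀ i, ∀ y ∈ ball (x i) (δ i), |V i (x i) - V i y| ≤ A * ‖x i - y‖ ^ s)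
    (hV₀ : Tendsto (fun i => V i (x i)) l (𝓝 V₀)) (hm : m < V₀) :
    ∀ᶠ i in l, ∀ y ∈ ball (x i) (δ i), m ≤ V i y := by
  have lower_limit : Tendsto (fun i => V i (x i) - |A| * δ i ^ s) l (𝓝 V₀) := by
    simpa [Real.zero_rpow hs.ne'] using
      hV₀.sub ((hδ.rpow_const (.inr hs.le)).const_mul |A|)
  filter_upwards [lower_limit.eventually (lt_mem_nhds hm)] with i hi y hy
  have oscillation : A * ‖x i - y‖ ^ s ≤ |A| * δ i ^ s := by
    have : ‖x i - y‖ ≤ δ i := by rw [← dist_eq_norm, dist_comm]; exact hy.le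
    gcongr
    exact le_abs_self A
  linarith [(abs_le.1 (hV i y hy)).2]

section Rescaling

variable {E : Type*} [NormedAddCommGroup E] [NormedSpace ℝ E]

theorem ball_infDist_frontier_subset [FiniteDimensional ℝ E] {s : Set E} {x : E} (hx : x ∈ s) :
    ball x (infDist x (frontier s)) ⊆ s := by
  rcases eq_or_ne s Set.univ with rfl | hs
  · exact Set.subset_univ _
  · obtain ⟨y, hy, dist_eq⟩ := exists_mem_frontier_infDist_compl_eq_dist hx hs
    refine (ball_subset_ball ?_).trans ball_infDist_compl_subset
    exact (infDist_le_dist_of_mem hy).trans_eq dist_eq.symm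

theorem add_smul_mem_ball {x θ : E} {r ρ : ℝ} (hr : 0 < r) (hθ : θ ∈ ball (0 : E) (ρ / r)) :
    x + r • θ ∈ ball x ρ := by
  rw [mem_ball_zero_iff, lt_div_iff₀ hr, mul_comm] at hθ
  rwa [mem_ball, dist_self_add_left, norm_smul, Real.norm_of_nonneg hr.le]

open scoped Pointwise in
theorem pow_finrank_mul_setIntegral_ball_comp_add_smul [FiniteDimensional ℝ E]
    [MeasurableSpace E] [BorelSpace E] (μ : Measure E) [μ.IsAddHaarMeasure] (g : E → ℝ) (x : E)
    {r : ℝ} (hr : 0 < r) (ρ : ℝ) :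
    r ^ Module.finrank ℝ E * ∫ y in ball (0 : E) (ρ / r), g (x + r • y) ∂μ =
      ∫ y in ball x ρ, g y ∂μ := by
  have smul_ball_zero : r • ball (0 : E) (ρ / r) = ball 0 ρ := by
    rw [_root_.smul_ball hr.ne', smul_zero, Real.norm_of_nonneg hr.le, mul_div_cancel₀ _ hr.ne']
  have preimage_ball : (fun y : E => x + y) ⁻¹' ball x ρ = ball 0 ρ := by
    ext y
    simp
  rw [Measure.setIntegral_comp_smul_of_pos μ (fun y => g (x + y)) _ hr, smul_ball_zero,
    ← preimage_ball, (measurePreserving_add_left μ x).setIntegral_preimage_emb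
      (measurableEmbedding_addLeft x) g (ball x ρ), smul_eq_mul,
    mul_inv_cancel_left₀ (pow_pos hr _).ne']

theorem exists_contDiff_eqOn_closedBall [HasContDiffBump E] {n : ℕ∞} {g : E → ℝ} {x : E} {ρ R : ℝ}
    (hρ : 0 < ρ) (hρR : ρ < R) (hg : ContDiffOn ℝ n g (ball x R)) :
    ∃ f : E → ℝ, ContDiff ℝ n f ∧ Set.EqOn f g (closedBall x ρ) := by
  let φ : ContDiffBump x := ⟨ρ, (ρ + R) / 2, hρ, by linarith⟩
  refine ⟨fun y => φ y * g y, contDiff_iff_contDiffAt.2 fun y => ?_, fun y hy => ?_⟩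
  · by_cases hy : y ∈ ball x R
    · exact φ.contDiffAt.mul (hg.contDiffAt (isOpen_ball.mem_nhds hy))
    · have y_notMem : y ∉ tsupport φ := by
        rw [φ.tsupport_eq]
        exact fun h => hy (closedBall_subset_ball (show (ρ + R) / 2 < R by linarith) h)
      refine contDiffAt_const (c := (0 : ℝ)) |>.congr_of_eventuallyEq ?_
      filter_upwards [notMem_tsupport_iff_eventuallyEq.1 y_notMem] with z hz
      rw [hz, Pi.zero_apply, zero_mul]
  · exact (congrArg (· * g y) (φ.one_of_mem_closedBall hy)).trans (one_mul _)

end Rescaling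

/-! ### Locally uniform convergence of derivatives -/

/-- Convergence in `C²_loc`: on every compact set, `f i` tends to `g` uniformly together with the
first and second derivatives. -/
def TendstoC2Loc {ι E F : Type*} [NormedAddCommGroup E] [NormedSpace ℝ E] [NormedAddCommGroup F]
    [NormedSpace ℝ F] (f : ι → E → F) (g : E → F) (l : Filter ι) : Prop :=
  ∀ K : Set E, IsCompact K →
    TendstoUniformlyOn f g l K ∧
    TendstoUniformlyOn (fun i => fderiv ℝ (f i)) (fderiv ℝ g) l K ∧
    TendstoUniformlyOn (fun i => fderiv ℝ (fderiv ℝ (f i))) (fderiv ℝ (fderiv ℝ g)) l K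

section C2Limits

variable {ι E F : Type*} [NormedAddCommGroup E] [NormedSpace ℝ E] [NormedAddCommGroup F]
  [NormedSpace ℝ F] {l : Filter ι}

theorem hasFDerivAt_of_tendstoUniformlyOn_nhds [l.NeBot] {f : ι → E → F} {g : E → F}
    {g' : E → E →L[ℝ] F} {s : Set E} {x : E} (hs : s ∈ 𝓝 x)
    (hf : ∀ᶠ i in l, ∀ y ∈ s, DifferentiableAt ℝ (f i) y) (hfg : TendstoUniformlyOn f g l s)
    (hf' : TendstoUniformlyOn (fun i => fderiv ℝ (f i)) g' l s) : HasFDerivAt g (g' x) x := by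
  refine hasFDerivAt_of_tendstoUniformlyOnFilter (l := l) (f := f) (f' := fun i => fderiv ℝ (f i))
    ((tendstoUniformlyOn_iff_tendstoUniformlyOnFilter.1 hf').mono_right (le_principal_iff.2 hs))
    ?_ (mem_of_superset hs fun y hy => hfg.tendsto_at hy)
  filter_upwards [hf.prod_mk hs] with ⟨i, y⟩ ⟨hi, hy⟩ using (hi y hy).hasFDerivAt

theorem TendstoC2Loc.contDiff [ProperSpace E] [l.NeBot] {f : ι → E → F} {g : E → F}
    (h : TendstoC2Loc f g l)
    (hf : ∀ k : ℝ, ∀ᶠ i in l, ∀ y ∈ closedBall (0 : E) k, ContDiffAt ℝ 2 (f i) y) :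
    ContDiff ℝ 2 g := by
  have mem_nhds (x : E) : closedBall (0 : E) (‖x‖ + 1) ∈ 𝓝 x :=
    mem_of_superset (ball_mem_nhds x one_pos) fun y hy => by
      rw [mem_closedBall_zero_iff]
      linarith [norm_le_norm_add_norm_sub' y x, mem_ball_iff_norm.1 hy]
  have fderiv_contDiffAt (k : ℝ) :
      ∀ᶠ i in l, ∀ y ∈ closedBall (0 : E) k, ContDiffAt ℝ 1 (fderiv ℝ (f i)) y :=
    (hf k).mono fun i hi y hy => (hi y hy).fderiv_right (by norm_num)
  have g_hasFDerivAt (x : E) : HasFDerivAt g (fderiv ℝ g x) x := by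
    obtain ⟨conv0, conv1, -⟩ := h _ (isCompact_closedBall 0 (‖x‖ + 1))
    exact hasFDerivAt_of_tendstoUniformlyOn_nhds (mem_nhds x)
      ((hf _).mono fun i hi y hy => (hi y hy).differentiableAt two_ne_zero) conv0 conv1
  have fderiv_hasFDerivAt (x : E) : HasFDerivAt (fderiv ℝ g) (fderiv ℝ (fderiv ℝ g) x) x := by
    obtain ⟨-, conv1, conv2⟩ := h _ (isCompact_closedBall 0 (‖x‖ + 1))
    exact hasFDerivAt_of_tendstoUniformlyOn_nhds (mem_nhds x)
      ((fderiv_contDiffAt _).mono fun i hi y hy => (hi y hy).differentiableAt one_ne_zero)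
      conv1 conv2
  have fderiv_fderiv_continuous : Continuous (fderiv ℝ (fderiv ℝ g)) :=
    continuous_iff_continuousAt.2 fun x =>
      ((h _ (isCompact_closedBall 0 (‖x‖ + 1))).2.2.continuousOn
        ((fderiv_contDiffAt _).mono fun i hi y hy => ((hi y hy).fderiv_right (m := 0)
          (by norm_num)).continuousAt.continuousWithinAt).frequently).continuousAt (mem_nhds x)
  rw [show (2 : WithTop ℕ∞) = 1 + 1 by norm_num, contDiff_succ_iff_fderiv]
  exact ⟨fun x => (g_hasFDerivAt x).differentiableAt, by simp,
    contDiff_one_iff_fderiv.2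
      ⟨fun x => (fderiv_hasFDerivAt x).differentiableAt, fderiv_fderiv_continuous⟩⟩

theorem TendstoC2Loc.tendsto_pd {f : ι → E2 → ℝ} {g : E2 → ℝ} (h : TendstoC2Loc f g l) (j : Fin 2)
    (x : E2) : Tendsto (fun i => pd j (f i) x) l (𝓝 (pd j g x)) :=
  ((ContinuousLinearMap.apply ℝ ℝ (EuclideanSpace.single j 1 : E2)).continuous.tendsto _).comp
    ((h {x} isCompact_singleton).2.1.tendsto_at (Set.mem_singleton x))

theorem TendstoC2Loc.tendstoUniformlyOn_lapl {f : ι → E2 → ℝ} {g : E2 → ℝ}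
    (h : TendstoC2Loc f g l) (hg : ContDiff ℝ 2 g) {K : Set E2} (hK : IsCompact K)
    (hf : ∀ᶠ i in l, ∀ y ∈ K, ContDiffAt ℝ 2 (f i) y) :
    TendstoUniformlyOn (fun i => lapl (f i)) (lapl g) l K := by
  let trace : (E2 →L[ℝ] E2 →L[ℝ] ℝ) →L[ℝ] ℝ := ∑ j : Fin 2,
    (ContinuousLinearMap.apply ℝ ℝ (EuclideanSpace.single j 1)).comp
      (ContinuousLinearMap.apply ℝ (E2 →L[ℝ] ℝ) (EuclideanSpace.single j 1))
  have trace_fderiv {φ : E2 → ℝ} {y : E2} (hφ : ContDiffAt ℝ 2 φ y) :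
      trace (fderiv ℝ (fderiv ℝ φ) y) = lapl φ y := by
    simp [trace, lapl, pd_pd_eq_fderiv_fderiv hφ]
  have trace_tendsto := trace.uniformContinuous.comp_tendstoUniformlyOn (h K hK).2.2
  refine (trace_tendsto.congr ?_).congr_right fun y _ => trace_fderiv (y := y) hg.contDiffAt
  filter_upwards [hf] with i hi y hy using trace_fderiv (hi y hy)

end C2Limits

/-! ### Blow-up sequences -/

theorem setIntegral_annulus_abs_comp_smul_le {Z : E2 → ℝ} {R a b B : ℝ} (hZ : ContDiff ℝ 2 Z)
    (hR : 0 < R) (ha : 0 < a) (hab : a ≤ b) (hlapl : ∀ y ∈ ball 0 (b * R), lapl Z y ≤ 0)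
    (hZ0 : ∀ y ∈ closedBall 0 (b * R), 0 ≤ Z y) (hB : ∀ ξ : E2, ‖ξ‖ = a → Z (R • ξ) ≤ B) :
    ∫ ξ in {ξ : E2 | ‖ξ‖ ∈ Set.Icc a b}, |Z (R • ξ)| ≤ 2 * π * B * b ^ 2 := by
  have nonneg {ξ : E2} (hξ : ‖ξ‖ ≤ b) : 0 ≤ Z (R • ξ) := by
    refine hZ0 _ ?_
    rw [mem_closedBall_zero_iff, norm_smul, Real.norm_of_nonneg hR.le, mul_comm]
    gcongr
  have B_nonneg : 0 ≤ B := by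
    obtain ⟨ξ, hξ⟩ := exists_norm_eq E2 ha.le
    exact (nonneg (hξ.trans_le hab)).trans (hB ξ hξ)
  have scaled_lapl (ξ : E2) (hξ : ξ ∈ ball (0 : E2) b) : lapl (fun y => Z (R • y)) ξ ≤ 0 := by
    have := lapl_comp_add_smul Z 0 R ξ
    simp only [zero_add] at this
    rw [this]
    refine mul_nonpos_of_nonneg_of_nonpos (sq_nonneg R) (hlapl _ ?_)
    rw [mem_ball_zero_iff] at hξ
    rw [mem_ball_zero_iff, norm_smul, Real.norm_of_nonneg hR.le, mul_comm]
    gcongr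
  calc ∫ ξ in {ξ : E2 | ‖ξ‖ ∈ Set.Icc a b}, |Z (R • ξ)|
      = ∫ ξ in {ξ : E2 | ‖ξ‖ ∈ Set.Icc a b}, Z (R • ξ) :=
        setIntegral_congr_fun (measurable_norm measurableSet_Icc)
          fun ξ hξ => abs_of_nonneg (nonneg hξ.2)
    _ ≤ 2 * π * B * b ^ 2 := by
        simpa using setIntegral_annulus_le_of_lapl_nonpos (x := 0)
          (hZ.comp (contDiff_const_smul R)) ha hab B_nonneg scaled_lapl
          fun ξ hξ => hB ξ (mem_sphere_zero_iff_norm.1 hξ)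

/-- A sequence of nonnegative solutions of `-Δu = V e^u` on balls of radius `δ i` about `x i`,
blowing up with mass `8π` at the scale `r i ≪ δ i` along the profile `u₀`. -/
structure IsBlowUpSequence (V u : ℕ → E2 → ℝ) (x : ℕ → E2) (δ r : ℕ → ℝ) (u₀ : E2 → ℝ)
    (V₀ : ℝ) : Prop where
  scale_pos (i : ℕ) : 0 < r i
  radius_pos (i : ℕ) : 0 < δ i
  tendsto_radius_div_scale : Tendsto (fun i => δ i / r i) atTop atTop
  contDiffOn (i : ℕ) : ContDiffOn ℝ 2 (u i) (ball (x i) (δ i))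
  nonneg (i : ℕ) : ∀ y ∈ ball (x i) (δ i), 0 ≤ u i y
  neg_lapl (i : ℕ) : ∀ y ∈ ball (x i) (δ i), -lapl (u i) y = V i y * Real.exp (u i y)
  coeff_nonneg (i : ℕ) : ∀ y ∈ ball (x i) (δ i), 0 ≤ V i y
  coeff_le : ∃ b, ∀ i, ∀ y ∈ ball (x i) (δ i), V i y ≤ b
  half_le_coeff : ∀ᶠ i in atTop, ∀ y ∈ ball (x i) (δ i), V₀ / 2 ≤ V i y
  tendsto_mass : Tendsto (fun i => ∫ y in ball (x i) (δ i / 2), V i y * Real.exp (u i y)) atTop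
    (𝓝 (8 * π))
  circle_le : ∃ B, ∀ i, ∀ ξ : E2, ‖ξ‖ = 5 / 16 → u i (x i + δ i • ξ) ≤ B
  coeff_pos : 0 < V₀
  neg_lapl_limit (y : E2) : -lapl u₀ y = V₀ * Real.exp (u₀ y)
  tendstoC2Loc : TendstoC2Loc (fun i θ => u i (x i + r i • θ) - u i (x i)) u₀ atTop

namespace IsBlowUpSequence

variable {V u : ℕ → E2 → ℝ} {x : ℕ → E2} {δ r : ℕ → ℝ} {u₀ : E2 → ℝ} {V₀ : ℝ}

theorem contDiffOn_rescaled (h : IsBlowUpSequence V u x δ r u₀ V₀) (i : ℕ) :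
    ContDiffOn ℝ 2 (fun θ => u i (x i + r i • θ)) (ball 0 (δ i / r i)) :=
  (h.contDiffOn i).comp (by fun_prop) fun _ hθ => add_smul_mem_ball (h.scale_pos i) hθ

theorem eventually_contDiffAt_rescaled_sub (h : IsBlowUpSequence V u x δ r u₀ V₀) (k : ℝ) :
    ∀ᶠ i in atTop, ∀ θ ∈ closedBall (0 : E2) k,
      ContDiffAt ℝ 2 (fun θ => u i (x i + r i • θ) - u i (x i)) θ := by
  filter_upwards [h.tendsto_radius_div_scale.eventually_gt_atTop k] with i hi θ hθ
  exact ((h.contDiffOn_rescaled i).contDiffAt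
    (isOpen_ball.mem_nhds (closedBall_subset_ball hi hθ))).sub contDiffAt_const

theorem contDiff_limit (h : IsBlowUpSequence V u x δ r u₀ V₀) : ContDiff ℝ 2 u₀ :=
  h.tendstoC2Loc.contDiff h.eventually_contDiffAt_rescaled_sub

theorem add_smul_mem_ball_of_mem_ball (h : IsBlowUpSequence V u x δ r u₀ V₀) {i : ℕ} {θ : E2}
    (hθ : θ ∈ ball (0 : E2) (15 / 32 * (δ i / r i))) : x i + r i • θ ∈ ball (x i) (δ i / 2) := by
  rw [← mul_div_assoc] at hθ
  exact ball_subset_ball (by linarith [h.radius_pos i]) (add_smul_mem_ball (h.scale_pos i) hθ)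

theorem add_smul_mem_ball_radius (h : IsBlowUpSequence V u x δ r u₀ V₀) {i : ℕ} {θ : E2}
    (hθ : θ ∈ ball (0 : E2) (15 / 32 * (δ i / r i))) : x i + r i • θ ∈ ball (x i) (δ i) :=
  ball_subset_ball (half_le_self (h.radius_pos i).le) (h.add_smul_mem_ball_of_mem_ball hθ)

section Extension

variable {Z : E2 → ℝ} {i : ℕ} {θ : E2}

theorem pd_eq_of_eqOn
    (hZ : Set.EqOn Z (fun θ => u i (x i + r i • θ)) (closedBall 0 (15 / 32 * (δ i / r i))))
    (hθ : θ ∈ ball (0 : E2) (15 / 32 * (δ i / r i))) (j : Fin 2) :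
    pd j Z θ = pd j (fun θ => u i (x i + r i • θ) - u i (x i)) θ := by
  rw [(pd_congr_of_eventuallyEq (hZ.eventuallyEq_of_mem (closedBall_mem_nhds_of_mem hθ))
    j).eq_of_nhds, pd_sub_const]

theorem lapl_eq_of_eqOn
    (hZ : Set.EqOn Z (fun θ => u i (x i + r i • θ)) (closedBall 0 (15 / 32 * (δ i / r i))))
    (hθ : θ ∈ ball (0 : E2) (15 / 32 * (δ i / r i))) :
    lapl Z θ = lapl (fun θ => u i (x i + r i • θ) - u i (x i)) θ := by
  rw [lapl_congr_of_eventuallyEq (hZ.eventuallyEq_of_mem (closedBall_mem_nhds_of_mem hθ)),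
    lapl_sub_const]

theorem neg_lapl_eq_of_eqOn (h : IsBlowUpSequence V u x δ r u₀ V₀)
    (hZ : Set.EqOn Z (fun θ => u i (x i + r i • θ)) (closedBall 0 (15 / 32 * (δ i / r i))))
    (hθ : θ ∈ ball (0 : E2) (15 / 32 * (δ i / r i))) :
    -lapl Z θ = r i ^ 2 * (V i (x i + r i • θ) * Real.exp (u i (x i + r i • θ))) := by
  rw [lapl_congr_of_eventuallyEq (hZ.eventuallyEq_of_mem (closedBall_mem_nhds_of_mem hθ)),
    lapl_comp_add_smul, ← h.neg_lapl i _ (h.add_smul_mem_ball_radius hθ), mul_neg]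

theorem neg_lapl_bounds_of_eqOn (h : IsBlowUpSequence V u x δ r u₀ V₀) {b : ℝ}
    (hZ : Set.EqOn Z (fun θ => u i (x i + r i • θ)) (closedBall 0 (15 / 32 * (δ i / r i))))
    (hV : ∀ y ∈ ball (x i) (δ i), V₀ / 2 ≤ V i y) (hb : ∀ y ∈ ball (x i) (δ i), V i y ≤ b)
    (hθ : θ ∈ ball (0 : E2) (15 / 32 * (δ i / r i))) :
    V₀ / 2 * r i ^ 2 * Real.exp (Z θ) ≤ -lapl Z θ ∧
      -lapl Z θ ≤ 2 * b / V₀ * (V₀ / 2 * r i ^ 2 * Real.exp (Z θ)) := by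
  have V₀_ne := h.coeff_pos.ne'
  have mem := h.add_smul_mem_ball_radius hθ
  rw [h.neg_lapl_eq_of_eqOn hZ hθ, hZ (ball_subset_closedBall hθ)]
  set e := Real.exp (u i (x i + r i • θ))
  constructor
  · calc V₀ / 2 * r i ^ 2 * e = r i ^ 2 * (V₀ / 2 * e) := by ring
      _ ≤ r i ^ 2 * (V i (x i + r i • θ) * e) := by gcongr; exact hV _ mem
  · calc r i ^ 2 * (V i (x i + r i • θ) * e) ≤ r i ^ 2 * (b * e) := by gcongr; exact hb _ mem
      _ = 2 * b / V₀ * (V₀ / 2 * r i ^ 2 * e) := by field_simp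

theorem setIntegral_neg_lapl_le_of_eqOn (h : IsBlowUpSequence V u x δ r u₀ V₀)
    (hZ : Set.EqOn Z (fun θ => u i (x i + r i • θ)) (closedBall 0 (15 / 32 * (δ i / r i))))
    (hint : IntegrableOn (fun y => V i y * Real.exp (u i y)) (ball (x i) (δ i / 2))) :
    ∫ θ in ball (0 : E2) (15 / 32 * (δ i / r i)), -lapl Z θ ≤
      ∫ y in ball (x i) (δ i / 2), V i y * Real.exp (u i y) := by
  have δ_pos := h.radius_pos i
  calc ∫ θ in ball (0 : E2) (15 / 32 * (δ i / r i)), -lapl Z θ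
      = ∫ y in ball (x i) (15 / 32 * δ i), V i y * Real.exp (u i y) := by
        rw [setIntegral_congr_fun measurableSet_ball fun θ hθ => h.neg_lapl_eq_of_eqOn hZ hθ,
          integral_const_mul, ← mul_div_assoc]
        simpa only [finrank_euclideanSpace_fin] using
          pow_finrank_mul_setIntegral_ball_comp_add_smul volume
            (fun y => V i y * Real.exp (u i y)) (x i) (h.scale_pos i) (15 / 32 * δ i)
    _ ≤ ∫ y in ball (x i) (δ i / 2), V i y * Real.exp (u i y) := by
        refine setIntegral_mono_set hint ?_ (ball_subset_ball (by linarith)).eventuallyLE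
        filter_upwards [ae_restrict_mem measurableSet_ball] with y hy
        exact mul_nonneg (h.coeff_nonneg i y (ball_subset_ball (by linarith) hy))
          (Real.exp_pos _).le

theorem setIntegral_annulus_abs_le_of_eqOn (h : IsBlowUpSequence V u x δ r u₀ V₀) {B : ℝ}
    (hZ2 : ContDiff ℝ 2 Z)
    (hZ : Set.EqOn Z (fun θ => u i (x i + r i • θ)) (closedBall 0 (15 / 32 * (δ i / r i))))
    (hB : ∀ ξ : E2, ‖ξ‖ = 5 / 16 → u i (x i + δ i • ξ) ≤ B) :
    ∫ ξ in {ξ : E2 | ‖ξ‖ ∈ Set.Icc (5 / 16 : ℝ) (7 / 16)}, |Z ((δ i / r i) • ξ)| ≤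
      2 * π * B * (7 / 16) ^ 2 := by
  have R_pos : 0 < δ i / r i := div_pos (h.radius_pos i) (h.scale_pos i)
  have closedBall_subset : closedBall (0 : E2) (7 / 16 * (δ i / r i)) ⊆
      ball 0 (15 / 32 * (δ i / r i)) := closedBall_subset_ball (by linarith)
  refine setIntegral_annulus_abs_comp_smul_le hZ2 R_pos (by norm_num) (by norm_num)
    (fun θ hθ => ?_) (fun θ hθ => ?_) fun ξ hξ => ?_
  · have mem := closedBall_subset (ball_subset_closedBall hθ)
    rw [← neg_nonneg, h.neg_lapl_eq_of_eqOn hZ mem]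
    have := h.coeff_nonneg i _ (h.add_smul_mem_ball_radius mem)
    positivity
  · rw [hZ (ball_subset_closedBall (closedBall_subset hθ))]
    exact h.nonneg i _ (h.add_smul_mem_ball_radius (closedBall_subset hθ))
  · rw [hZ ?_]
    · simpa only [smul_smul, mul_div_cancel₀ _ (h.scale_pos i).ne'] using hB ξ hξ
    · rw [mem_closedBall_zero_iff, norm_smul, Real.norm_of_nonneg R_pos.le, hξ]
      linarith

end Extension

theorem isRescaledBlowUp (h : IsBlowUpSequence V u x δ r u₀ V₀) {Z : ℕ → E2 → ℝ}
    (hZ2 : ∀ i, ContDiff ℝ 2 (Z i))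
    (hZ : ∀ i, Set.EqOn (Z i) (fun θ => u i (x i + r i • θ))
      (closedBall 0 (15 / 32 * (δ i / r i)))) :
    IsRescaledBlowUp Z (fun i => δ i / r i) u₀ V₀ where
  contDiff := hZ2
  radius_pos i := div_pos (h.radius_pos i) (h.scale_pos i)
  tendsto_radius := h.tendsto_radius_div_scale
  neg_lapl_bounds := by
    obtain ⟨b, hb⟩ := h.coeff_le
    have V₀_pos := h.coeff_pos
    have b_pos : 0 < b := by
      obtain ⟨i, hi⟩ := h.half_le_coeff.exists
      have mem := mem_ball_self (x := x i) (h.radius_pos i)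
      linarith [hi _ mem, hb i _ mem]
    refine ⟨2 * b / V₀, by positivity, h.half_le_coeff.mono fun i hi => ?_⟩
    exact ⟨V₀ / 2 * r i ^ 2, mul_pos (half_pos V₀_pos) (pow_pos (h.scale_pos i) 2),
      fun y hy => h.neg_lapl_bounds_of_eqOn (hZ i) hi (hb i) hy⟩
  mass_le η hη := by
    filter_upwards [h.tendsto_mass.eventually_ne (by positivity : 8 * π ≠ 0),
      h.tendsto_mass.eventually (ge_mem_nhds (lt_add_of_pos_right _ hη))] with i mass_ne mass_le
    exact (h.setIntegral_neg_lapl_le_of_eqOn (hZ i)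
      (Integrable.of_integral_ne_zero mass_ne)).trans mass_le
  annulus_le := by
    obtain ⟨B, hB⟩ := h.circle_le
    exact ⟨_, .of_forall fun i => h.setIntegral_annulus_abs_le_of_eqOn (hZ2 i) (hZ i) (hB i)⟩
  coeff_pos := h.coeff_pos
  contDiff_limit := h.contDiff_limit
  neg_lapl_limit := h.neg_lapl_limit
  tendstoUniformlyOn_neg_lapl k := by
    have lapl_tendsto := h.tendstoC2Loc.tendstoUniformlyOn_lapl h.contDiff_limit
      (isCompact_closedBall 0 k) (h.eventually_contDiffAt_rescaled_sub k)
    refine (lapl_tendsto.neg.congr ?_).congr_right fun y _ => h.neg_lapl_limit y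
    filter_upwards [h.tendsto_radius_div_scale.eventually_gt_atTop (32 / 15 * k)] with i hi y hy
    exact congrArg Neg.neg
      (lapl_eq_of_eqOn (hZ i) (closedBall_subset_ball (by linarith) hy)).symm
  tendsto_pd j y := by
    refine (h.tendstoC2Loc.tendsto_pd j y).congr' ?_
    filter_upwards [h.tendsto_radius_div_scale.eventually_gt_atTop (32 / 15 * ‖y‖)] with i hi
    exact (pd_eq_of_eqOn (hZ i) (mem_ball_zero_iff.2 (by linarith)) j).symm

theorem exists_eventually_abs_pd_sub_pd_limit_le (h : IsBlowUpSequence V u x δ r u₀ V₀) :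
    ∃ C > 0, ∀ ε > 0, ∃ k > 0, ∀ᶠ i in atTop, ∀ j θ, k ≤ ‖θ‖ → ‖θ‖ ≤ δ i / r i / 4 →
      |pd j (fun θ => u i (x i + r i • θ) - u i (x i)) θ - pd j u₀ θ| ≤
        ε / ‖θ‖ + C / (δ i / r i) := by
  have R_pos (i : ℕ) : 0 < δ i / r i := div_pos (h.radius_pos i) (h.scale_pos i)
  choose Z hZ2 hZ using fun i => exists_contDiff_eqOn_closedBall (n := 2)
    (mul_pos (by norm_num : (0 : ℝ) < 15 / 32) (R_pos i)) (by linarith [R_pos i])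
    (h.contDiffOn_rescaled i)
  obtain ⟨C, hC, asymptotics⟩ :=
    (h.isRescaledBlowUp hZ2 hZ).exists_eventually_abs_pd_sub_pd_limit_le
  refine ⟨C, hC, fun ε hε => ?_⟩
  obtain ⟨k, hk, bound⟩ := asymptotics ε hε
  refine ⟨k, hk, bound.mono fun i hi j θ hkθ hθR => ?_⟩
  rw [← pd_eq_of_eqOn (hZ i) (mem_ball_zero_iff.2 (by linarith [R_pos i])) j]
  exact hi j θ hkθ hθR

end IsBlowUpSequence

end

theorem stmt12_general
    (b A s : ℝ) (hs : 0 < s)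
    (V u : ℕ → E2 → ℝ) (x_ : ℕ → E2) (δ r : ℕ → ℝ) (v : ℕ → E2 → ℝ)
    (hu : ∀ i, ContDiffOn ℝ 2 (u i) (closedBall (0 : E2) 1))
    (hVb : ∀ i, ∀ x ∈ ball (0 : E2) 1, 0 ≤ V i x ∧ V i x ≤ b)
    (hVhol : ∀ i, ∀ x ∈ ball (0 : E2) 1, ∀ y ∈ ball (0 : E2) 1, |V i x - V i y| ≤ A * ‖x - y‖ ^ s)
    (hpde : ∀ i, ∀ x ∈ ball (0 : E2) 1, -(lapl (u i) x) = V i x * Real.exp (u i x))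
    (hbc : ∀ i, ∀ x ∈ sphere (0 : E2) 1, u i x = 0)
    (hxmem : ∀ i, x_ i ∈ ball (0 : E2) 1)
    (hδ : ∀ i, δ i = Metric.infDist (x_ i) (sphere (0 : E2) 1))
    (hδ0 : Tendsto δ atTop (nhds 0))
    (hr : ∀ i, r i = Real.exp (-(u i (x_ i)) / 2))
    (hrδ : Tendsto (fun i => r i / δ i) atTop (nhds 0))
    (hmass : Tendsto (fun i => ∫ y in ball (x_ i) (δ i / 2), V i y * Real.exp (u i y)) atTop
      (nhds (8 * Real.pi)))
    (hbound : ∃ B : ℝ, ∀ i, ∀ y : E2, ‖y‖ = 5 / 16 → u i (x_ i + δ i • y) ≤ B)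
    (hv : ∀ i θ, v i θ = u i (x_ i + r i • θ) - u i (x_ i))
    (u₀ : E2 → ℝ) (V₀ : ℝ) (hV₀pos : 0 < V₀)
    (hV₀ : Tendsto (fun i => V i (x_ i)) atTop (nhds V₀))
    (hu₀ : ∀ x : E2, -(lapl u₀ x) = V₀ * Real.exp (u₀ x))
    (hconv : TendstoC2Loc v u₀ atTop) :
    ∃ C > (0 : ℝ), ∀ ε : ℝ, 0 < ε → ∃ k > (0 : ℝ), ∃ i₀ : ℕ, ∀ i ≥ i₀, ∀ j : Fin 2, ∀ θ : E2,
      k ≤ ‖θ‖ → ‖θ‖ ≤ δ i * (1 / 4) / r i →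
      |pd j (v i) θ - pd j u₀ θ| ≤ ε / ‖θ‖ + C * (r i / δ i) := by
  obtain rfl : v = fun i θ => u i (x_ i + r i • θ) - u i (x_ i) := funext₂ hv
  have r_pos (i : ℕ) : 0 < r i := by rw [hr]; exact Real.exp_pos _
  have δ_pos (i : ℕ) : 0 < δ i := by
    rw [hδ, ← isClosed_sphere.notMem_iff_infDist_pos (NormedSpace.sphere_nonempty.2 zero_le_one)]
    exact fun h => (mem_ball.1 (hxmem i)).ne h
  have ball_subset (i : ℕ) : ball (x_ i) (δ i) ⊆ ball 0 1 := by
    rw [hδ, ← frontier_ball (0 : E2) one_ne_zero]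
    exact ball_infDist_frontier_subset (hxmem i)
  have lapl_nonpos (i : ℕ) (y : E2) (hy : y ∈ ball (0 : E2) 1) : lapl (u i) y ≤ 0 := by
    rw [← neg_nonneg, hpde i y hy]
    exact mul_nonneg (hVb i y hy).1 (Real.exp_pos _).le
  have blowUp : IsBlowUpSequence V u x_ δ r u₀ V₀ :=
    { scale_pos := r_pos
      radius_pos := δ_pos
      tendsto_radius_div_scale := tendsto_div_atTop_of_tendsto_div_nhds_zero r_pos δ_pos hrδ
      contDiffOn := fun i => (hu i).mono ((ball_subset i).trans ball_subset_closedBall)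
      nonneg := fun i y hy => nonneg_of_lapl_nonpos_of_eq_zero_on_sphere one_ne_zero (hu i)
        (lapl_nonpos i) (hbc i) (ball_subset_closedBall (ball_subset i hy))
      neg_lapl := fun i y hy => hpde i y (ball_subset i hy)
      coeff_nonneg := fun i y hy => (hVb i y (ball_subset i hy)).1
      coeff_le := ⟨b, fun i y hy => (hVb i y (ball_subset i hy)).2⟩
      half_le_coeff := eventually_forall_mem_ball_le_of_holder hs hδ0
        (fun i y hy => hVhol i _ (hxmem i) y (ball_subset i hy)) hV₀ (half_lt_self hV₀pos)
      tendsto_mass := hmass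
      circle_le := hbound
      coeff_pos := hV₀pos
      neg_lapl_limit := hu₀
      tendstoC2Loc := hconv }
  obtain ⟨C, hC, asymptotics⟩ := blowUp.exists_eventually_abs_pd_sub_pd_limit_le
  refine ⟨C, hC, fun ε hε => ?_⟩
  obtain ⟨k, hk, bound⟩ := asymptotics ε hε
  obtain ⟨i₀, hi₀⟩ := eventually_atTop.1 bound
  refine ⟨k, hk, i₀, fun i hi j θ hkθ hθR => ?_⟩
  refine (hi₀ i hi j θ hkθ (hθR.trans_eq (by ring))).trans_eq ?_
  rw [div_div_eq_mul_div, mul_div_assoc]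

theorem stmt12
    (b A s C₀ : ℝ) (hs1 : 1/2 < s) (hs2 : s ≤ 1)
    (V u : ℕ → E2 → ℝ) (x_ : ℕ → E2) (δ r : ℕ → ℝ) (v : ℕ → E2 → ℝ)
    (hu : ∀ i, ContDiffOn ℝ 2 (u i) (closedBall (0:E2) 1))
    (hVb : ∀ i, ∀ x ∈ ball (0:E2) 1, 0 ≤ V i x ∧ V i x ≤ b)
    (hVhol : ∀ i, ∀ x ∈ ball (0:E2) 1, ∀ y ∈ ball (0:E2) 1, |V i x - V i y| ≤ A * ‖x - y‖ ^ s)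
    (hpde : ∀ i, ∀ x ∈ ball (0:E2) 1, -(lapl (u i) x) = V i x * Real.exp (u i x))
    (hbc : ∀ i, ∀ x ∈ sphere (0:E2) 1, u i x = 0)
    (hint : ∀ i, (∫ y in ball (0:E2) 1, Real.exp (u i y)) ≤ C₀)
    (hxmem : ∀ i, x_ i ∈ ball (0:E2) 1)
    (hmax : ∀ i, ∀ y ∈ closedBall (0:E2) 1, u i y ≤ u i (x_ i))
    (hblow : Tendsto (fun i => u i (x_ i)) atTop atTop)
    (hδ : ∀ i, δ i = Metric.infDist (x_ i) (sphere (0:E2) 1))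
    (hδ0 : Tendsto δ atTop (nhds 0))
    (hr : ∀ i, r i = Real.exp (-(u i (x_ i)) / 2))
    (hrδ : Tendsto (fun i => r i / δ i) atTop (nhds 0))
    (hmass : Tendsto (fun i => ∫ y in ball (x_ i) (δ i / 2), V i y * Real.exp (u i y)) atTop
      (nhds (8 * Real.pi)))
    (hbound : ∀ ε : ℝ, 0 < ε → ε < 1 → ∃ Cε : ℝ, ∀ i, ∀ y : E2, ‖y‖ = ε →
      u i (x_ i + δ i • y) ≤ Cε)
    (hv : ∀ i θ, v i θ = u i (x_ i + r i • θ) - u i (x_ i))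
    (u₀ : E2 → ℝ) (V₀ : ℝ) (hV₀pos : 0 < V₀)
    (hV₀ : Tendsto (fun i => V i (x_ i)) atTop (nhds V₀))
    (hu₀ : ∀ x : E2, -(lapl u₀ x) = V₀ * Real.exp (u₀ x))
    (hconv : ∀ K : Set E2, IsCompact K →
      TendstoUniformlyOn (fun i θ => v i θ) u₀ atTop K ∧
      TendstoUniformlyOn (fun i θ => fderiv ℝ (v i) θ) (fderiv ℝ u₀) atTop K ∧
      TendstoUniformlyOn (fun i θ => fderiv ℝ (fun w => fderiv ℝ (v i) w) θ)
        (fderiv ℝ (fun w => fderiv ℝ u₀ w)) atTop K) :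
    ∀ ε : ℝ, 0 < ε → ∀ ε' : ℝ, ε' ∈ Set.Ioo (0:ℝ) (1/4) →
      ∃ k > (0:ℝ), ∃ i₀ : ℕ, ∃ C > (0:ℝ), ∀ i ≥ i₀, ∀ j : Fin 2, ∀ θ : E2,
        k ≤ ‖θ‖ → ‖θ‖ ≤ δ i * ε' / r i →
        |pd j (v i) θ - pd j u₀ θ| ≤ ε / ‖θ‖ + C * (r i / δ i) := by
  obtain ⟨C, hC, h⟩ := stmt12_general b A s (by linarith) V u x_ δ r v hu hVb hVhol hpde hbc hxmem
    hδ hδ0 hr hrδ hmass (hbound (5 / 16) (by norm_num) (by norm_num)) hv u₀ V₀ hV₀pos hV₀ hu₀ hconv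
  intro ε hε ε' hε'
  obtain ⟨k, hk, i₀, hi₀⟩ := h ε hε
  refine ⟨k, hk, i₀, C, hC, fun i hi j θ hkθ hθ => hi₀ i hi j θ hkθ (hθ.trans ?_)⟩
  rw [hδ, hr]
  gcongr
  exacts [infDist_nonneg, hε'.2.le]
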